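/- arXiv:1812.01451 — 3 statements merged into one kernel-verified Lean document; each statement's English description precedes it below -/
import Mathlib

section
/- For every integer l ≥ 0, every m ∈ {−l,…,l} and every μ ∈ {−1,0,1}, the pointwise product formula Y_l^m(n) Y_1^μ(n) = √(3/(4π)) ( η_{l+1,m}^{μ} Y_{l+1}^{m+μ}(n) + (−1)^μ η_{−l,m}^{μ} Y_{l−1}^{m+μ}(n) ) holds for all n on the unit sphere S², with the convention that Y_{l'}^{m'} = 0 whenever |m'| > l' or l' < 0. -/
open MeasureTheory Real
open scoped BigOperators Classical

noncomputable section

/-- Velocity space ℝ³. -/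
abbrev V3 := Fin 3 → ℝ

/-- Euclidean norm |v| on ℝ³. -/
def nrm (v : V3) : ℝ := Real.sqrt (∑ i, v i ^ 2)

/-- The (normalized) Maxwellian M(v) = (2π)^{-3/2} exp(-|v|²/2). -/
def Mxw (v : V3) : ℝ := (2 * π) ^ (-(3 : ℝ) / 2) * Real.exp (-(∑ i, v i ^ 2) / 2)

/-- |α| = α₁ + α₂ + α₃ for a multi-index. -/
def degIdx (α : Fin 3 → ℕ) : ℕ := α 0 + α 1 + α 2

/-- α! = α₁! α₂! α₃! for a multi-index. -/
def multiFact (α : Fin 3 → ℕ) : ℕ := (α 0).factorial * (α 1).factorial * (α 2).factorial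

/-- Multidimensional Hermite polynomial
`H^α(v) = ((-1)^{|α|}/M(v)) ∂^{|α|} M(v) / ∂v₁^{α₁} ∂v₂^{α₂} ∂v₃^{α₃}`. -/
def Herm (α : Fin 3 → ℕ) (v : V3) : ℝ :=
  ((-1 : ℝ) ^ degIdx α / Mxw v) *
    iteratedDeriv (α 0) (fun x1 =>
      iteratedDeriv (α 1) (fun x2 =>
        iteratedDeriv (α 2) (fun x3 => Mxw ![x1, x2, x3]) (v 2)) (v 1)) (v 0)

/-- Partial derivative ∂f/∂vᵢ. -/
def pd (i : Fin 3) (f : V3 → ℝ) (v : V3) : ℝ := fderiv ℝ f v (Pi.single i 1)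

/-- Divergence of a vector field on ℝ³. -/
def div3 (F : V3 → V3) (v : V3) : ℝ := ∑ i, pd i (fun w => F w i) v

/-- Collision kernel matrix A(v) = Λ|v|^{γ+2} Π(v), Π_{ij}(v) = δ_{ij} - vᵢvⱼ/|v|². -/
def Aker (Λ γ : ℝ) (v : V3) (i j : Fin 3) : ℝ :=
  Λ * nrm v ^ (γ + 2) * ((if i = j then (1 : ℝ) else 0) - v i * v j / nrm v ^ 2)

/-- Fokker-Planck-Landau collision operator
`Q[f](v) = ∇_v · ∫ A(v-v*) (f(v*)∇_v f(v) - f(v)∇_{v*} f(v*)) dv*`. -/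
def Qcol (Λ γ : ℝ) (f : V3 → ℝ) (v : V3) : ℝ :=
  div3 (fun w i =>
    ∫ w₁ : V3, ∑ j, Aker Λ γ (w - w₁) i j * (f w₁ * pd j f w - f w * pd j f w₁)) v

/-- G_{st}(γ,p,q) = ∫ |g|^γ g_s g_t H^p(g) H^q(g) M(g) dg. -/
def Gst (γ : ℝ) (s t : Fin 3) (p q : Fin 3 → ℕ) : ℝ :=
  ∫ g : V3, nrm g ^ γ * g s * g t * Herm p g * Herm q g * Mxw g

/-- Generalized binomial coefficient C(x,k) = x(x-1)⋯(x-k+1)/k!. -/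
def genBinom (x : ℝ) (k : ℕ) : ℝ := (∏ j ∈ Finset.range k, (x - j)) / k.factorial

/-- Scalar coefficient a_{pq}^{λκ}, zero unless p+q = λ+κ. -/
def aCoe (p q lam kap : ℕ) : ℝ :=
  if p + q = lam + kap then
    (2 : ℝ) ^ (-(((p : ℝ) + q) / 2)) * lam.factorial * kap.factorial *
      ∑ s ∈ Finset.Icc (p - kap) (min p lam),
        (-1 : ℝ) ^ ((q : ℤ) - lam + s) /
          ((s.factorial * (lam - s).factorial * (p - s).factorial *
            ((q : ℤ) - lam + s).toNat.factorial : ℕ) : ℝ)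
  else 0

/-- Multi-index coefficient a_{p,q}^{λ,κ} = ∏ᵢ a_{pᵢqᵢ}^{λᵢκᵢ}. -/
def aMulti (p q lam kap : Fin 3 → ℕ) : ℝ := ∏ i, aCoe (p i) (q i) (lam i) (kap i)

/-- B_p^q(γ,s,t) = -G_{st}(γ,p,q) + δ_{st} Σ_r G_{rr}(γ,p,q). -/
def Bcoe (γ : ℝ) (s t : Fin 3) (p q : Fin 3 → ℕ) : ℝ :=
  -Gst γ s t p q + (if s = t then (1 : ℝ) else 0) * ∑ r, Gst γ r r p q

/-- The expansion coefficient A_α^{λ,κ} of the FPL collision operator. -/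
def coeA (Λ γ : ℝ) (α lam kap : Fin 3 → ℕ) : ℝ :=
  (1 / (multiFact α : ℝ)) *
    ∫ v : V3, Herm α v *
      div3 (fun w i =>
        ∫ w₁ : V3, ∑ j, Aker Λ γ (w - w₁) i j *
          (Herm lam w₁ * Mxw w₁ * pd j (fun u => Herm kap u * Mxw u) w -
            Herm lam w * Mxw w * pd j (fun u => Herm kap u * Mxw u) w₁)) v

/-- Multi-indices p with |p| < n, i.e. 0 ≤ |p| ≤ n-1. -/
def idxLt (n : ℕ) : Finset (Fin 3 → ℕ) :=
  (Fintype.piFinset (fun _ : Fin 3 => Finset.range n)).filter (fun p => degIdx p < n)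

/-- Pairs of multi-indices (p,q) with p + q = σ. -/
def idxPairs (σ : Fin 3 → ℕ) : Finset ((Fin 3 → ℕ) × (Fin 3 → ℕ)) :=
  ((Fintype.piFinset fun i => Finset.range (σ i + 1)) ×ˢ
      (Fintype.piFinset fun i => Finset.range (σ i + 1))).filter fun x => x.1 + x.2 = σ

/-- Multi-index permutation operator exchanging the i-th and j-th entries. -/
def swapIdx (i j : Fin 3) (p : Fin 3 → ℕ) : Fin 3 → ℕ := p ∘ Equiv.swap i j

/-- Associated Legendre function
`P_l^m(x) = ((-1)^m/(2^l l!)) (1-x²)^{m/2} d^{l+m}/dx^{l+m} (x²-1)^l`. -/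
def assocLegendre (l : ℕ) (m : ℤ) (x : ℝ) : ℝ :=
  ((-1 : ℝ) ^ m * (1 - x ^ 2) ^ ((m : ℝ) / 2) / (2 ^ l * l.factorial)) *
    iteratedDeriv ((l : ℤ) + m).toNat (fun y => (y ^ 2 - 1) ^ l) x

/-- Spherical harmonic Y_l^m(n), written in terms of cos θ = n₃ and φ = arg(n₁ + i n₂). -/
def sphHarm (l : ℕ) (m : ℤ) (n : V3) : ℂ :=
  ((Real.sqrt ((2 * l + 1) / (4 * π) * ((l : ℤ) - m).toNat.factorial /
      ((l : ℤ) + m).toNat.factorial) * assocLegendre l m (n 2) : ℝ) : ℂ) *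
    Complex.exp (Complex.I * m * (Complex.arg ((n 0 : ℂ) + n 1 * Complex.I) : ℝ))

/-- Spherical harmonic with the convention Y_{l'}^{m'} = 0 when |m'| > l' or l' < 0. -/
def sphHarmZ (l m : ℤ) (n : V3) : ℂ :=
  if 0 ≤ l ∧ m.natAbs ≤ l.toNat then sphHarm l.toNat m n else 0

/-- Surface integral over the unit sphere S² in spherical coordinates. -/
def sphereIntegral (F : V3 → ℂ) : ℂ :=
  ∫ θ in (0 : ℝ)..π, ∫ φ in (0 : ℝ)..(2 * π),
    F ![Real.sin θ * Real.cos φ, Real.sin θ * Real.sin φ, Real.cos θ] * (Real.sin θ : ℂ)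

/-- Laguerre polynomial L_n^{(β)}(x) = (x^{-β} eˣ / n!) dⁿ/dxⁿ [x^{n+β} e^{-x}]. -/
def laguerre (n : ℕ) (β : ℝ) (x : ℝ) : ℝ :=
  (x ^ (-β) * Real.exp x / n.factorial) *
    iteratedDeriv n (fun y => y ^ ((n : ℝ) + β) * Real.exp (-y)) x

/-- Normalized Burnett polynomial B_{α̂}(v) with α̂ = (l, m, nn). -/
def Burnett (l : ℕ) (m : ℤ) (nn : ℕ) (v : V3) : ℂ :=
  ((Real.sqrt ((2 : ℝ) ^ (1 - (l : ℝ)) * π ^ ((3 : ℝ) / 2) * nn.factorial /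
        Real.Gamma (nn + l + 3 / 2)) *
      laguerre nn ((l : ℝ) + 1 / 2) (nrm v ^ 2 / 2) * nrm v ^ l : ℝ) : ℂ) *
    sphHarm l m (fun i => v i / nrm v)

/-- Connection coefficient C_{α̂}^α = ∫ B_{α̂}(v) H^α(v) M(v) dv. -/
def coeC (l : ℕ) (m : ℤ) (nn : ℕ) (α : Fin 3 → ℕ) : ℂ :=
  ∫ v : V3, Burnett l m nn v * ((Herm α v * Mxw v : ℝ) : ℂ)

/-- Burnett indices α̂ = (α̂₁,α̂₂,α̂₃), α̂₂ ∈ {-α̂₁,…,α̂₁}, with |α̂|_B = α̂₁ + 2α̂₃ = N. -/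
def burnettIdx (N : ℕ) : Finset (ℕ × ℤ × ℕ) :=
  ((Finset.range (N + 1)) ×ˢ (Finset.Icc (-(N : ℤ)) N) ×ˢ (Finset.range (N + 1))).filter
    fun x => x.1 + 2 * x.2.2 = N ∧ x.2.1.natAbs ≤ x.1

/-- D_{n₁n₂}^{l₁l₂} = √(n₁!n₂!/(Γ(n₁+l₁+3/2)Γ(n₂+l₂+3/2))). -/
def Dcoe (n1 n2 l1 l2 : ℕ) : ℝ :=
  Real.sqrt ((n1.factorial * n2.factorial : ℝ) /
    (Real.Gamma (n1 + l1 + 3 / 2) * Real.Gamma (n2 + l2 + 3 / 2)))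

/-- K(μ,α,κ,m,n) = (-1)^{m+n} Γ(μ+1) Σᵢ C(μ-α,m-i) C(μ-κ,n-i) C(i+μ,i). -/
def Kcoe (μ a k : ℝ) (m n : ℕ) : ℝ :=
  (-1 : ℝ) ^ (m + n) * Real.Gamma (μ + 1) *
    ∑ i ∈ Finset.range (min m n + 1),
      genBinom (μ - a) (m - i) * genBinom (μ - k) (n - i) * genBinom ((i : ℝ) + μ) i

/-- F_{st}(l₁,m₁,l₂,m₂) = ∫_{S²} n_s n_t Y_{l₁}^{m₁}(n) Y_{l₂}^{m₂}(n) dn. -/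
def Fst (s t : Fin 3) (l1 : ℕ) (m1 : ℤ) (l2 : ℕ) (m2 : ℤ) : ℂ :=
  sphereIntegral fun n => ((n s * n t : ℝ) : ℂ) * sphHarm l1 m1 n * sphHarm l2 m2 n

/-- Kronecker delta on ℤ. -/
def kdZ (a b : ℤ) : ℝ := if a = b then 1 else 0

/-- η_{lm}^μ as in the paper (l, m, μ integers, μ ∈ {-1,0,1}). -/
def eta (l m μ : ℤ) : ℝ :=
  Real.sqrt ((((l : ℝ) + (2 * kdZ 1 μ - 1) * m + kdZ 1 μ) *
      ((l : ℝ) - (2 * kdZ (-1) μ - 1) * m + kdZ (-1) μ)) /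
    ((2 : ℝ) ^ μ.natAbs * (2 * l - 1) * (2 * l + 1)))

/-- General Maxwellian M_{ρ,u,θ}. -/
def Mgen (ρ θ : ℝ) (u : V3) (v : V3) : ℝ :=
  ρ / (2 * π * θ) ^ ((3 : ℝ) / 2) * Real.exp (-(nrm (v - u) ^ 2) / (2 * θ))

/-- Hermite coefficient f_α = (1/α!) ∫ H^α(v) f(v) dv. -/
def hermCoeff (f : V3 → ℝ) (α : Fin 3 → ℕ) : ℝ :=
  (1 / (multiFact α : ℝ)) * ∫ v : V3, Herm α v * f v

/-- τ(t) = 1 - 0.4 e^{-4t}. -/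
def tau (t : ℝ) : ℝ := 1 - 0.4 * Real.exp (-4 * t)

/-- The BKW distribution. -/
def fBKW (t : ℝ) (v : V3) : ℝ :=
  (2 * π * tau t) ^ (-(3 : ℝ) / 2) * Real.exp (-(nrm v ^ 2) / (2 * tau t)) *
    (1 + (1 - tau t) / tau t * (nrm v ^ 2 / (2 * tau t) - 3 / 2))


/-- The normalized polynomial `(X² - 1)^l / (2^l l!)`. -/
def wP (l : ℕ) : Polynomial ℝ :=
  Polynomial.C (1 / (2 ^ l * (l.factorial : ℝ))) * (Polynomial.X ^ 2 - 1) ^ l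

/-- The shifted polynomial `wP (l - 1)`, zero for `l = 0`. -/
def vP : ℕ → Polynomial ℝ
  | 0 => 0
  | l + 1 => wP l

/-- Iterated derivatives of polynomials. -/
def dP (k : ℕ) (p : Polynomial ℝ) : Polynomial ℝ := (Polynomial.derivative)^[k] p

lemma C2 : (Polynomial.C 2 : Polynomial ℝ) = 2 := rfl

lemma dP_zero (p : Polynomial ℝ) : dP 0 p = p := rfl

lemma dP_succ (k : ℕ) (p : Polynomial ℝ) : dP (k + 1) p = Polynomial.derivative (dP k p) := by
  unfold dP; rw [Function.iterate_succ_apply']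

lemma dP_succ' (k : ℕ) (p : Polynomial ℝ) : dP (k + 1) p = dP k (Polynomial.derivative p) := by
  unfold dP; rw [Function.iterate_succ_apply]

lemma dP_add (k : ℕ) (p q : Polynomial ℝ) : dP k (p + q) = dP k p + dP k q := by
  unfold dP; exact iterate_map_add _ k p q

lemma dP_C_mul (k : ℕ) (a : ℝ) (p : Polynomial ℝ) :
    dP k (Polynomial.C a * p) = Polynomial.C a * dP k p := by
  unfold dP; exact Polynomial.iterate_derivative_C_mul a p k

lemma dP_mul_X (k : ℕ) (p : Polynomial ℝ) :
    dP k (p * Polynomial.X) = dP k p * Polynomial.X + (k : Polynomial ℝ) * dP (k - 1) p := by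
  unfold dP; rw [Polynomial.iterate_derivative_mul_X]; simp

lemma wP_succ (l : ℕ) : (Polynomial.X ^ 2 - 1) * wP l = Polynomial.C (2 * ((l : ℝ) + 1)) * wP (l + 1) := by
  unfold wP
  rw [mul_left_comm, ← pow_succ', ← mul_assoc, ← Polynomial.C_mul]
  congr 2
  rw [Nat.factorial_succ]
  have := Nat.factorial_ne_zero l
  push_cast
  field_simp
  ring

lemma uv (l : ℕ) : (Polynomial.X ^ 2 - 1) * vP l = Polynomial.C (2 * (l : ℝ)) * wP l := by
  cases l with
  | zero => simp [vP]
  | succ l => simp only [vP]; rw [wP_succ]; push_cast; rfl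

lemma wP_deriv (l : ℕ) : Polynomial.derivative (wP l) = vP l * Polynomial.X := by
  cases l with
  | zero => simp [wP, vP]
  | succ l =>
    simp only [vP, wP]
    rw [Polynomial.derivative_C_mul, Polynomial.derivative_pow]
    have h : Polynomial.derivative ((Polynomial.X : Polynomial ℝ) ^ 2 - 1)
        = Polynomial.C 2 * Polynomial.X := by
      simp [C2]; norm_num
    rw [h]
    have e : (1 / (2 ^ l * (l.factorial : ℝ))) =
        (1 / (2 ^ (l+1) * ((l+1).factorial : ℝ))) * (((l + 1 : ℕ) : ℝ) * 2) := by
      rw [Nat.factorial_succ]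
      have := Nat.factorial_ne_zero l
      push_cast
      field_simp
      ring
    rw [e]
    simp only [Polynomial.C_mul, Nat.add_sub_cancel]
    ring

lemma I0 (l k : ℕ) : dP (k + 1) (wP l) * Polynomial.X
    = (2 * (l : Polynomial ℝ) - (k : Polynomial ℝ)) * dP k (wP l) + dP k (vP l) := by
  have h : Polynomial.derivative (wP l) * Polynomial.X
      = Polynomial.C (2 * (l : ℝ)) * wP l + vP l := by
    rw [wP_deriv, ← uv]; ring
  have h2 := congrArg (dP k) h
  rw [dP_mul_X, dP_add, dP_C_mul, ← dP_succ'] at h2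
  have h3 : (k : Polynomial ℝ) * dP (k - 1) (Polynomial.derivative (wP l)) = k * dP k (wP l) := by
    cases k with
    | zero => simp
    | succ k => rw [← dP_succ']; simp
  rw [h3] at h2
  have h4 : Polynomial.C (2 * (l : ℝ)) = 2 * (l : Polynomial ℝ) := by simp [C2]
  rw [h4] at h2
  linear_combination h2

lemma I1 (l k : ℕ) : (2 * (l : Polynomial ℝ) + 1) * Polynomial.X * dP k (wP l)
    = (2 * (l : Polynomial ℝ) - (k : Polynomial ℝ) + 1) * dP (k + 1) (wP (l + 1)) + (k : Polynomial ℝ) * dP (k - 1) (vP l) := by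
  rw [dP_succ', wP_deriv, vP, dP_mul_X]
  cases k with
  | zero => simp; ring
  | succ k =>
    have := I0 l k
    simp only [Nat.add_sub_cancel]
    push_cast
    linear_combination ((k : Polynomial ℝ) + 1) * this

lemma I2 (l k : ℕ) : (2 * (l : Polynomial ℝ) + 1) * dP k (wP l)
    = dP (k + 2) (wP (l + 1)) - dP k (vP l) := by
  rw [dP_succ', wP_deriv, vP, dP_mul_X, I0]
  simp
  ring

lemma I3 (l k : ℕ) : (2 * (l : Polynomial ℝ) + 1) * (Polynomial.X ^ 2 - 1) * dP k (wP l)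
    = (2 * (l : Polynomial ℝ) - (k : Polynomial ℝ) + 1) * (2 * (l : Polynomial ℝ) - (k : Polynomial ℝ) + 2) * dP k (wP (l + 1))
      - (k : Polynomial ℝ) * ((k : Polynomial ℝ) - 1) * dP (k - 2) (vP l) := by
  induction k with
  | zero =>
    simp only [dP_zero]
    have := wP_succ l
    have h4 : Polynomial.C (2 * ((l : ℝ) + 1)) = 2 * ((l : Polynomial ℝ) + 1) := by simp [C2]
    rw [h4] at this
    push_cast
    linear_combination (2 * (l : Polynomial ℝ) + 1) * this
  | succ k ih =>
    have h := congrArg Polynomial.derivative ih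
    have c : ∀ (a : ℝ) (p : Polynomial ℝ), Polynomial.derivative (Polynomial.C a * p)
      = Polynomial.C a * Polynomial.derivative p := fun a p => Polynomial.derivative_C_mul a p
    have e1 : (2 * (l : Polynomial ℝ) + 1) * (Polynomial.X ^ 2 - 1) * dP k (wP l)
      = Polynomial.C (2 * (l : ℝ) + 1) * ((Polynomial.X ^ 2 - 1) * dP k (wP l)) := by
      simp [C2]; ring
    have e2 : (2 * (l : Polynomial ℝ) - (k : Polynomial ℝ) + 1) * (2 * (l : Polynomial ℝ) - (k : Polynomial ℝ) + 2) * dP k (wP (l + 1))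
      - (k : Polynomial ℝ) * ((k : Polynomial ℝ) - 1) * dP (k - 2) (vP l) =
      Polynomial.C ((2 * (l : ℝ) - k + 1) * (2 * (l : ℝ) - k + 2)) * dP k (wP (l + 1))
      - Polynomial.C ((k : ℝ) * (k - 1)) * dP (k - 2) (vP l) := by simp [C2]
    have e3 : Polynomial.derivative ((Polynomial.X : Polynomial ℝ) ^ 2 - 1)
        = 2 * Polynomial.X := by
      simp; norm_num
    rw [e1, e2, Polynomial.derivative_sub, c, c, c, Polynomial.derivative_mul, e3,
      ← dP_succ, ← dP_succ, ← dP_succ] at h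
    have h5 : (k : Polynomial ℝ) * (k - 1) * dP (k - 2 + 1) (vP l)
        = k * (k - 1) * dP (k - 1) (vP l) := by
      rcases k with _ | _ | k
      · simp
      · simp
      · simp
    have h6 := I1 l k
    simp only [Polynomial.C_mul, Polynomial.C_add, Polynomial.C_sub, Polynomial.C_1,
      Polynomial.C_ofNat, map_natCast] at h
    have h7 : k + 1 - 2 = k - 1 := by omega
    rw [h7]
    push_cast
    linear_combination h - h5 - 2 * h6

lemma eval_dP_zero (l k : ℕ) (hk : k < l) (x : ℝ) (hx : 1 - x ^ 2 = 0) :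
    (dP k (wP l)).eval x = 0 := by
  unfold wP
  rw [dP_C_mul]
  have h := Polynomial.pow_sub_dvd_iterate_derivative_pow (Polynomial.X ^ 2 - 1 : Polynomial ℝ) l k
  obtain ⟨c, hc⟩ := h
  unfold dP
  rw [hc]
  have : x ^ 2 - 1 = 0 := by linarith
  have : l - k ≠ 0 := by omega
  simp [*]

lemma iter_eval (k : ℕ) (p : Polynomial ℝ) (x : ℝ) :
    iteratedDeriv k (fun y => p.eval y) x = (dP k p).eval x := by
  induction k generalizing x with
  | zero => simp [dP_zero]
  | succ k ih =>
    rw [iteratedDeriv_succ, dP_succ, ← Polynomial.deriv]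
    congr 1
    funext y
    exact ih y

lemma assocLegendre_eq (l : ℕ) (m : ℤ) (x : ℝ) (p : ℕ) (hp : (l : ℤ) + m = p) :
    assocLegendre l m x = (-1 : ℝ) ^ m * (1 - x ^ 2) ^ ((m : ℝ) / 2) * (dP p (wP l)).eval x := by
  unfold assocLegendre
  have h : (fun y : ℝ => (y ^ 2 - 1) ^ l)
      = fun y => ((Polynomial.X ^ 2 - 1 : Polynomial ℝ) ^ l).eval y := by
    funext y; simp
  rw [h, iter_eval, hp, Int.toNat_natCast, wP, dP_C_mul]
  simp only [Polynomial.eval_mul, Polynomial.eval_C]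
  ring

/-- Normalization constant as a function of `l` and `p = l + m`, `q = l - m`. -/
def nC (l p q : ℕ) : ℝ := Real.sqrt ((2 * l + 1) / (4 * π) * q.factorial / p.factorial)

/-- Real part of the spherical harmonic without sign. -/
def rad (l p q : ℕ) (m : ℤ) (x : ℝ) : ℝ :=
  nC l p q * ((-1 : ℝ) ^ m * (1 - x ^ 2) ^ ((m : ℝ) / 2) * (dP p (wP l)).eval x)

lemma sphHarm_eq (l p q : ℕ) (m : ℤ) (n : V3) (hp : (l : ℤ) + m = p) (hq : (l : ℤ) - m = q) :
    sphHarm l m n = ((rad l p q m (n 2) : ℝ) : ℂ) *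
      Complex.exp (Complex.I * m * (Complex.arg ((n 0 : ℂ) + n 1 * Complex.I) : ℝ)) := by
  unfold sphHarm
  rw [assocLegendre_eq l m _ p hp, hp, hq, Int.toNat_natCast, Int.toNat_natCast]
  rfl

lemma rpow_step_up (l p : ℕ) (m : ℤ) (hp : (l : ℤ) + m = p) (x : ℝ) (hx : 0 ≤ 1 - x ^ 2) :
    (1 - x ^ 2) ^ ((m : ℝ) / 2) * (1 - x ^ 2) ^ (((1 : ℤ) : ℝ) / 2) * (dP p (wP l)).eval x
      = (1 - x ^ 2) ^ (((m + 1 : ℤ) : ℝ) / 2) * (dP p (wP l)).eval x := by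
  rcases hx.eq_or_lt with h | h
  · rw [← h]
    have : (0 : ℝ) ^ (((1 : ℤ) : ℝ) / 2) = 0 := Real.zero_rpow (by norm_num)
    rw [this]
    by_cases hm : m = -1
    · rw [eval_dP_zero l p (by omega) x h.symm]; simp
    · rw [Real.zero_rpow (x := ((m + 1 : ℤ) : ℝ) / 2)]
      · simp
      · have : ((m + 1 : ℤ) : ℝ) ≠ 0 := by
          rw [Int.cast_ne_zero]; omega
        positivity
  · rw [← Real.rpow_add h]
    congr 2
    push_cast; ring

lemma rpow_step_down (m : ℤ) (x : ℝ) (hx : 0 ≤ 1 - x ^ 2) :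
    (1 - x ^ 2) ^ ((m : ℝ) / 2) * (1 - x ^ 2) ^ (((-1 : ℤ) : ℝ) / 2) * (x ^ 2 - 1)
      = (1 - x ^ 2) ^ (((m + -1 : ℤ) : ℝ) / 2) * (x ^ 2 - 1) := by
  rcases hx.eq_or_lt with h | h
  · have : x ^ 2 - 1 = 0 := by linarith
    rw [this]; simp
  · rw [← Real.rpow_add h]
    congr 2
    push_cast; ring

lemma sqrt_comb (a b c d : ℝ) (ha : 0 ≤ a) (hc : 0 ≤ c) (h : a * b = c ^ 2 * d) :
    Real.sqrt a * Real.sqrt b = c * Real.sqrt d := by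
  rw [← Real.sqrt_mul ha, h, Real.sqrt_mul (sq_nonneg c), Real.sqrt_sq hc]

lemma nC_eq (l p q : ℕ) (h : p + q = 2 * l) :
    nC l p q = Real.sqrt (((p : ℝ) + q + 1) / (4 * π) * q.factorial / p.factorial) := by
  have : (p : ℝ) + q = 2 * l := by exact_mod_cast h
  unfold nC; rw [this]

lemma dP_top (l k : ℕ) (hk : 2 * l < k) : dP k (wP l) = 0 := by
  unfold dP
  apply Polynomial.iterate_derivative_eq_zero
  refine lt_of_le_of_lt ?_ hk
  unfold wP
  refine (Polynomial.natDegree_C_mul_le _ _).trans ?_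
  refine (Polynomial.natDegree_pow_le).trans ?_
  have : (Polynomial.X ^ 2 - 1 : Polynomial ℝ).natDegree ≤ 2 := by compute_degree
  nlinarith

lemma casts (l p q : ℕ) (m : ℤ) (hp : (l : ℤ) + m = p) (hq : (l : ℤ) - m = q) :
    (l : ℝ) = ((p : ℝ) + q) / 2 ∧ (m : ℝ) = ((p : ℝ) - q) / 2 := by
  have h1 : (l : ℝ) + m = p := by exact_mod_cast hp
  have h2 : (l : ℝ) - m = q := by exact_mod_cast hq
  constructor <;> linarith

lemma etaP0 (l p q : ℕ) (m : ℤ) (hp : (l : ℤ) + m = p) (hq : (l : ℤ) - m = q) :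
    eta ((l : ℤ) + 1) m 0 * nC (l + 1) (p + 1) (q + 1)
      = ((q : ℝ) + 1) / (2 * l + 1) * nC l p q := by
  obtain ⟨h1, h2⟩ := casts l p q m hp hq
  rw [nC_eq l p q (by omega), nC_eq (l + 1) (p + 1) (q + 1) (by omega)]
  have e : eta ((l : ℤ) + 1) m 0
      = Real.sqrt (((q : ℝ) + 1) * (p + 1) / (((p : ℝ) + q + 1) * (p + q + 3))) := by
    unfold eta kdZ
    norm_num [h1, h2]
    congr 1
    ring_nf
  have hl : 2 * (l : ℝ) + 1 = p + q + 1 := by rw [h1]; ring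
  rw [e, hl]
  apply sqrt_comb
  · positivity
  · positivity
  · rw [Nat.factorial_succ, Nat.factorial_succ]
    have := Nat.factorial_ne_zero p
    push_cast
    field_simp
    ring

lemma etaPp (l p q : ℕ) (m : ℤ) (hp : (l : ℤ) + m = p) (hq : (l : ℤ) - m = q) :
    eta ((l : ℤ) + 1) m 1 * nC (l + 1) (p + 2) q
      = 1 / (2 * l + 1) * (Real.sqrt (1 / 2) * nC l p q) := by
  obtain ⟨h1, h2⟩ := casts l p q m hp hq
  rw [nC_eq l p q (by omega), nC_eq (l + 1) (p + 2) q (by omega)]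
  have e : eta ((l : ℤ) + 1) m 1
      = Real.sqrt (((p : ℝ) + 2) * (p + 1) / (2 * ((p : ℝ) + q + 1) * (p + q + 3))) := by
    unfold eta kdZ
    norm_num [h1, h2]
    congr 1
    ring_nf
  have hl : 2 * (l : ℝ) + 1 = p + q + 1 := by rw [h1]; ring
  rw [e, hl, ← Real.sqrt_mul (by norm_num : (0 : ℝ) ≤ 1 / 2)]
  apply sqrt_comb
  · positivity
  · positivity
  · rw [Nat.factorial_succ, Nat.factorial_succ]
    have := Nat.factorial_ne_zero p
    push_cast
    field_simp
    ring

lemma etaPm (l p q : ℕ) (m : ℤ) (hp : (l : ℤ) + m = p) (hq : (l : ℤ) - m = q) :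
    eta ((l : ℤ) + 1) m (-1) * nC (l + 1) p (q + 2)
      = ((q : ℝ) + 1) * (q + 2) / (2 * l + 1) * (Real.sqrt (1 / 2) * nC l p q) := by
  obtain ⟨h1, h2⟩ := casts l p q m hp hq
  rw [nC_eq l p q (by omega), nC_eq (l + 1) p (q + 2) (by omega)]
  have e : eta ((l : ℤ) + 1) m (-1)
      = Real.sqrt (((q : ℝ) + 2) * (q + 1) / (2 * ((p : ℝ) + q + 1) * (p + q + 3))) := by
    unfold eta kdZ
    norm_num [h1, h2]
    congr 1
    ring_nf
  have hl : 2 * (l : ℝ) + 1 = p + q + 1 := by rw [h1]; ring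
  rw [e, hl, ← Real.sqrt_mul (by norm_num : (0 : ℝ) ≤ 1 / 2)]
  apply sqrt_comb
  · positivity
  · positivity
  · rw [Nat.factorial_succ, Nat.factorial_succ]
    have := Nat.factorial_ne_zero p
    push_cast
    field_simp
    ring

lemma etaM0 (l p q : ℕ) (m : ℤ) (hp : ((l + 1 : ℕ) : ℤ) + m = (p + 1 : ℕ))
    (hq : ((l + 1 : ℕ) : ℤ) - m = (q + 1 : ℕ)) :
    eta (-((l + 1 : ℕ) : ℤ)) m 0 * nC l p q
      = (((p + 1 : ℕ) : ℝ)) / (2 * (l + 1 : ℕ) + 1) * nC (l + 1) (p + 1) (q + 1) := by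
  obtain ⟨h1, h2⟩ := casts (l + 1) (p + 1) (q + 1) m hp hq
  rw [nC_eq l p q (by omega), nC_eq (l + 1) (p + 1) (q + 1) (by omega)]
  have e : eta (-((l + 1 : ℕ) : ℤ)) m 0
      = Real.sqrt (((q : ℝ) + 1) * (p + 1) / (((p : ℝ) + q + 1) * (p + q + 3))) := by
    unfold eta kdZ
    push_cast at h1 h2
    have h1' : (l : ℝ) = (p + q) / 2 := by linarith
    norm_num [h1', h2]
    congr 1
    ring_nf
  have hl : 2 * ((l + 1 : ℕ) : ℝ) + 1 = p + q + 3 := by rw [h1]; push_cast; ring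
  rw [e, hl]
  apply sqrt_comb
  · positivity
  · positivity
  · rw [Nat.factorial_succ, Nat.factorial_succ]
    have := Nat.factorial_ne_zero p
    push_cast
    field_simp
    ring

lemma etaMp (l p q : ℕ) (m : ℤ) (hp : ((l + 1 : ℕ) : ℤ) + m = p)
    (hq : ((l + 1 : ℕ) : ℤ) - m = (q + 2 : ℕ)) :
    eta (-((l + 1 : ℕ) : ℤ)) m 1 * nC l p q
      = 1 / (2 * (l + 1 : ℕ) + 1) * (Real.sqrt (1 / 2) * nC (l + 1) p (q + 2)) := by
  obtain ⟨h1, h2⟩ := casts (l + 1) p (q + 2) m hp hq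
  rw [nC_eq l p q (by omega), nC_eq (l + 1) p (q + 2) (by omega)]
  have e : eta (-((l + 1 : ℕ) : ℤ)) m 1
      = Real.sqrt (((q : ℝ) + 1) * (q + 2) / (2 * ((p : ℝ) + q + 1) * (p + q + 3))) := by
    unfold eta kdZ
    push_cast at h1 h2
    have h1' : (l : ℝ) = (p + q) / 2 := by linarith
    norm_num [h1', h2]
    congr 1
    ring_nf
  have hl : 2 * ((l + 1 : ℕ) : ℝ) + 1 = p + q + 3 := by rw [h1]; push_cast; ring
  rw [e, hl, ← Real.sqrt_mul (by norm_num : (0 : ℝ) ≤ 1 / 2)]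
  apply sqrt_comb
  · positivity
  · positivity
  · rw [Nat.factorial_succ, Nat.factorial_succ]
    have := Nat.factorial_ne_zero p
    push_cast
    field_simp
    ring

lemma etaMm (l p q : ℕ) (m : ℤ) (hp : ((l + 1 : ℕ) : ℤ) + m = (p + 2 : ℕ))
    (hq : ((l + 1 : ℕ) : ℤ) - m = q) :
    eta (-((l + 1 : ℕ) : ℤ)) m (-1) * nC l p q
      = ((p + 2 : ℕ) : ℝ) * (((p + 2 : ℕ) : ℝ) - 1) / (2 * (l + 1 : ℕ) + 1)
        * (Real.sqrt (1 / 2) * nC (l + 1) (p + 2) q) := by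
  obtain ⟨h1, h2⟩ := casts (l + 1) (p + 2) q m hp hq
  rw [nC_eq l p q (by omega), nC_eq (l + 1) (p + 2) q (by omega)]
  have e : eta (-((l + 1 : ℕ) : ℤ)) m (-1)
      = Real.sqrt (((p : ℝ) + 1) * (p + 2) / (2 * ((p : ℝ) + q + 1) * (p + q + 3))) := by
    unfold eta kdZ
    push_cast at h1 h2
    have h1' : (l : ℝ) = (p + q) / 2 := by linarith
    norm_num [h1', h2]
    congr 1
    ring_nf
  have hl : 2 * ((l + 1 : ℕ) : ℝ) + 1 = p + q + 3 := by rw [h1]; push_cast; ring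
  have hc : ((p + 2 : ℕ) : ℝ) * (((p + 2 : ℕ) : ℝ) - 1) = ((p : ℝ) + 2) * (p + 1) := by
    push_cast; ring
  rw [e, hl, hc, ← Real.sqrt_mul (by norm_num : (0 : ℝ) ≤ 1 / 2)]
  apply sqrt_comb
  · positivity
  · positivity
  · rw [Nat.factorial_succ, Nat.factorial_succ]
    have := Nat.factorial_ne_zero p
    push_cast
    field_simp
    ring

/-- The azimuthal factor. -/
def azi (m : ℤ) (n : V3) : ℂ :=
  Complex.exp (Complex.I * m * (Complex.arg ((n 0 : ℂ) + n 1 * Complex.I) : ℝ))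

lemma azi_add (m μ : ℤ) (n : V3) : azi (m + μ) n = azi m n * azi μ n := by
  unfold azi
  rw [← Complex.exp_add]
  congr 1
  push_cast
  ring

/-- The sign and the power of `sin θ`. -/
def sg (m : ℤ) (x : ℝ) : ℝ := (-1 : ℝ) ^ m * (1 - x ^ 2) ^ ((m : ℝ) / 2)

lemma sphHarm_eq' (l p q : ℕ) (m : ℤ) (n : V3) (hp : (l : ℤ) + m = p) (hq : (l : ℤ) - m = q) :
    sphHarm l m n = ((nC l p q * (sg m (n 2) * (dP p (wP l)).eval (n 2)) : ℝ) : ℂ) * azi m n := by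
  rw [sphHarm_eq l p q m n hp hq]; rfl

lemma sphHarmZ_pos (l p q : ℕ) (m L : ℤ) (n : V3) (hL : L = l) (hp : (l : ℤ) + m = p)
    (hq : (l : ℤ) - m = q) :
    sphHarmZ L m n = ((nC l p q * (sg m (n 2) * (dP p (wP l)).eval (n 2)) : ℝ) : ℂ) * azi m n := by
  unfold sphHarmZ
  rw [if_pos (by omega), hL, Int.toNat_natCast, sphHarm_eq' l p q m n hp hq]

lemma sphHarmZ_neg (L m : ℤ) (n : V3) (h : L < m.natAbs) : sphHarmZ L m n = 0 := by
  unfold sphHarmZ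
  rw [if_neg (by omega)]

lemma termM0 (l p q : ℕ) (m : ℤ) (n : V3) (hp : (l : ℤ) + m = p) (hq : (l : ℤ) - m = q) :
    ((eta (-(l : ℤ)) m 0 : ℝ) : ℂ) * sphHarmZ ((l : ℤ) - 1) (m + 0) n
      = (((p : ℝ) / (2 * l + 1) * nC l p q *
          (sg (m + 0) (n 2) * (dP (p - 1) (vP l)).eval (n 2)) : ℝ) : ℂ) * azi (m + 0) n := by
  rcases p with _ | p
  · rw [sphHarmZ_neg _ _ _ (by omega)]; simp
  rcases q with _ | q
  · rw [sphHarmZ_neg _ _ _ (by omega)]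
    rcases l with _ | l
    · omega
    · rw [vP, dP_top l _ (by omega)]; simp
  rcases l with _ | l
  · omega
  rw [sphHarmZ_pos l p q _ _ n (by omega) (by omega) (by omega), ← etaM0 l p q m hp hq, vP]
  simp only [Nat.add_sub_cancel]
  push_cast
  ring

lemma termMp (l p q : ℕ) (m : ℤ) (n : V3) (hp : (l : ℤ) + m = p) (hq : (l : ℤ) - m = q) :
    ((eta (-(l : ℤ)) m 1 : ℝ) : ℂ) * sphHarmZ ((l : ℤ) - 1) (m + 1) n
      = ((1 / (2 * l + 1) * (Real.sqrt (1 / 2) * nC l p q) *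
          (sg (m + 1) (n 2) * (dP p (vP l)).eval (n 2)) : ℝ) : ℂ) * azi (m + 1) n := by
  by_cases h : q < 2
  · rw [sphHarmZ_neg _ _ _ (by omega)]
    rcases l with _ | l
    · have : dP p 0 = 0 := by unfold dP; simp
      simp [vP, this]
    · rw [vP, dP_top l _ (by omega)]; simp
  obtain ⟨q, rfl⟩ : ∃ r, q = r + 2 := ⟨q - 2, by omega⟩
  rcases l with _ | l
  · omega
  rw [sphHarmZ_pos l p q _ _ n (by omega) (by omega) (by omega), ← etaMp l p q m hp hq, vP]
  push_cast
  ring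

lemma termMm (l p q : ℕ) (m : ℤ) (n : V3) (hp : (l : ℤ) + m = p) (hq : (l : ℤ) - m = q) :
    ((eta (-(l : ℤ)) m (-1) : ℝ) : ℂ) * sphHarmZ ((l : ℤ) - 1) (m + -1) n
      = (((p : ℝ) * ((p : ℝ) - 1) / (2 * l + 1) * (Real.sqrt (1 / 2) * nC l p q) *
          (sg (m + -1) (n 2) * (dP (p - 2) (vP l)).eval (n 2)) : ℝ) : ℂ) * azi (m + -1) n := by
  by_cases h : p < 2
  · rw [sphHarmZ_neg _ _ _ (by omega)]
    have : (p : ℝ) * ((p : ℝ) - 1) = 0 := by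
      interval_cases p <;> simp
    rw [this]; simp
  obtain ⟨p, rfl⟩ : ∃ r, p = r + 2 := ⟨p - 2, by omega⟩
  rcases l with _ | l
  · have h1 := sphHarmZ_neg (((0 : ℕ) : ℤ) - 1) (m + -1) n (by omega)
    have : dP p 0 = 0 := by unfold dP; simp
    rw [h1]; simp [vP, this]
  rw [sphHarmZ_pos l p q _ _ n (by omega) (by omega) (by omega), ← etaMm l p q m hp hq, vP]
  simp only [Nat.add_sub_cancel]
  push_cast
  ring

lemma wP_one : wP 1 = Polynomial.C (1 / 2) * (Polynomial.X ^ 2 - 1) := by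
  simp [wP]

lemma ev0 (x : ℝ) : (dP 0 (wP 1)).eval x = (x ^ 2 - 1) / 2 := by
  rw [dP_zero, wP_one]; simp; ring

lemma dP1 : dP 1 (wP 1) = Polynomial.X := by
  rw [dP_succ', wP_deriv, dP_zero]; simp [vP, wP]

lemma ev1 (x : ℝ) : (dP 1 (wP 1)).eval x = x := by
  rw [dP1]; simp

lemma ev2 (x : ℝ) : (dP 2 (wP 1)).eval x = 1 := by
  rw [dP_succ, dP1]; simp

lemma nC1 : nC 1 1 1 = Real.sqrt (3 / (4 * π)) := by
  unfold nC; norm_num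

lemma nC2 : nC 1 2 0 = Real.sqrt (3 / (4 * π)) * Real.sqrt (1 / 2) := by
  rw [← Real.sqrt_mul (by positivity)]
  unfold nC; congr 1; norm_num [Nat.factorial]; ring

lemma nC0 : nC 1 0 2 = Real.sqrt (3 / (4 * π)) * (2 * Real.sqrt (1 / 2)) := by
  have h : Real.sqrt (3 / (4 * π) * 2) = 2 * (Real.sqrt (3 / (4 * π)) * Real.sqrt (1 / 2)) := by
    rw [Real.sqrt_mul (by positivity), mul_left_comm]
    congr 1
    have := sqrt_comb 1 2 2 (1 / 2) (by norm_num) (by norm_num) (by norm_num)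
    simpa using this
  have h2 : nC 1 0 2 = Real.sqrt (3 / (4 * π) * 2) := by
    unfold nC; congr 1; norm_num [Nat.factorial]
  rw [h2, h]; ring

lemma J1 (l k : ℕ) (x : ℝ) : (2 * (l : ℝ) + 1) * x * (dP k (wP l)).eval x
    = (2 * (l : ℝ) - k + 1) * (dP (k + 1) (wP (l + 1))).eval x
      + k * (dP (k - 1) (vP l)).eval x := by
  have := congrArg (Polynomial.eval x) (I1 l k)
  simpa using this

lemma J2 (l k : ℕ) (x : ℝ) : (2 * (l : ℝ) + 1) * (dP k (wP l)).eval x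
    = (dP (k + 2) (wP (l + 1))).eval x - (dP k (vP l)).eval x := by
  have := congrArg (Polynomial.eval x) (I2 l k)
  simpa using this

lemma J3 (l k : ℕ) (x : ℝ) : (2 * (l : ℝ) + 1) * (x ^ 2 - 1) * (dP k (wP l)).eval x
    = (2 * (l : ℝ) - k + 1) * (2 * (l : ℝ) - k + 2) * (dP k (wP (l + 1))).eval x
      - k * (k - 1) * (dP (k - 2) (vP l)).eval x := by
  have := congrArg (Polynomial.eval x) (I3 l k)
  simpa using this

/-- pointwise product formula Y_l^m · Y_1^μ on the unit sphere, with
the convention Y_{l'}^{m'} = 0 when |m'| > l' or l' < 0. -/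
theorem sphHarm_mul_Y1 (l : ℕ) (m μ : ℤ) (hm : m.natAbs ≤ l)
    (hμ : μ = -1 ∨ μ = 0 ∨ μ = 1) (n : V3) (hn : nrm n = 1) :
    sphHarm l m n * sphHarm 1 μ n =
      ((Real.sqrt (3 / (4 * π)) : ℝ) : ℂ) *
        (((eta ((l : ℤ) + 1) m μ : ℝ) : ℂ) * sphHarmZ ((l : ℤ) + 1) (m + μ) n +
          (((-1 : ℝ) ^ μ : ℝ) : ℂ) * ((eta (-(l : ℤ)) m μ : ℝ) : ℂ) *
            sphHarmZ ((l : ℤ) - 1) (m + μ) n) := by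
  obtain ⟨p, hp⟩ : ∃ p : ℕ, (l : ℤ) + m = p := ⟨((l : ℤ) + m).toNat, by omega⟩
  obtain ⟨q, hq⟩ : ∃ q : ℕ, (l : ℤ) - m = q := ⟨((l : ℤ) - m).toNat, by omega⟩
  have hx : 0 ≤ 1 - n 2 ^ 2 := by
    unfold nrm at hn
    rw [Real.sqrt_eq_one, Fin.sum_univ_three] at hn
    nlinarith [sq_nonneg (n 0), sq_nonneg (n 1)]
  have hs : ∀ a b : ℤ, (-1 : ℝ) ^ (a + b) = (-1) ^ a * (-1) ^ b := fun a b =>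
    zpow_add₀ (by norm_num) a b
  have hl0 : (2 * (l : ℝ) + 1) ≠ 0 := by positivity
  have hqr : (q : ℝ) = 2 * l - p := by
    have : (p : ℤ) + q = 2 * l := by omega
    have : (p : ℝ) + q = 2 * l := by exact_mod_cast this
    linarith
  rw [sphHarm_eq' l p q m n hp hq]
  rcases hμ with rfl | rfl | rfl
  · rw [mul_assoc (((-1 : ℝ) ^ (-1 : ℤ) : ℝ) : ℂ), termMm l p q m n hp hq,
      sphHarmZ_pos (l + 1) p (q + 2) (m + -1) _ n (by push_cast; rfl) (by omega) (by omega),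
      sphHarm_eq' 1 0 2 (-1) n (by norm_num) (by norm_num), azi_add, ev0, nC0]
    have key : nC l p q * (sg m (n 2) * (dP p (wP l)).eval (n 2)) *
        (Real.sqrt (3 / (4 * π)) * (2 * Real.sqrt (1 / 2)) * (sg (-1) (n 2) * ((n 2 ^ 2 - 1) / 2)))
        = Real.sqrt (3 / (4 * π)) * (eta ((l : ℤ) + 1) m (-1) * (nC (l + 1) p (q + 2) *
            (sg (m + -1) (n 2) * (dP p (wP (l + 1))).eval (n 2)))
          + (-1 : ℝ) ^ (-1 : ℤ) * ((p : ℝ) * ((p : ℝ) - 1) / (2 * l + 1) *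
            (Real.sqrt (1 / 2) * nC l p q) *
            (sg (m + -1) (n 2) * (dP (p - 2) (vP l)).eval (n 2)))) := by
      rw [← mul_assoc (eta _ _ _), etaPm l p q m hp hq, hqr]
      have h1 := J3 l p (n 2)
      have h2 := rpow_step_down m (n 2) hx
      have h3 : (dP p (wP l)).eval (n 2) * (n 2 ^ 2 - 1) = 1 / (2 * (l : ℝ) + 1) *
          ((2 * (l : ℝ) - p + 1) * (2 * (l : ℝ) - p + 2) * (dP p (wP (l + 1))).eval (n 2)
          - p * (p - 1) * (dP (p - 2) (vP l)).eval (n 2)) := by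
        rw [← h1]; field_simp
      have h4 : sg m (n 2) * sg (-1) (n 2) * (n 2 ^ 2 - 1) = sg (m + -1) (n 2) * (n 2 ^ 2 - 1) := by
        unfold sg
        rw [hs]
        linear_combination ((-1 : ℝ) ^ m * (-1 : ℝ) ^ (-1 : ℤ)) * h2
      have h5 : (-1 : ℝ) ^ (-1 : ℤ) = -1 := by norm_num
      rw [h5]
      linear_combination (nC l p q * Real.sqrt (3 / (4 * π)) * Real.sqrt (1 / 2)) *
        ((dP p (wP l)).eval (n 2) * h4 + sg (m + -1) (n 2) * h3)
    have key' := congrArg (fun r : ℝ => (r : ℂ)) key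
    push_cast at key' ⊢
    linear_combination (azi m n * azi (-1) n) * key'
  · rw [mul_assoc (((-1 : ℝ) ^ (0 : ℤ) : ℝ) : ℂ), termM0 l p q m n hp hq,
      sphHarmZ_pos (l + 1) (p + 1) (q + 1) (m + 0) _ n (by push_cast; rfl) (by push_cast; omega)
        (by push_cast; omega),
      sphHarm_eq' 1 1 1 0 n (by norm_num) (by norm_num), azi_add, ev1, nC1]
    have key : nC l p q * (sg m (n 2) * (dP p (wP l)).eval (n 2)) *
        (Real.sqrt (3 / (4 * π)) * (sg 0 (n 2) * (n 2)))
        = Real.sqrt (3 / (4 * π)) * (eta ((l : ℤ) + 1) m 0 * (nC (l + 1) (p + 1) (q + 1) *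
            (sg (m + 0) (n 2) * (dP (p + 1) (wP (l + 1))).eval (n 2)))
          + (-1 : ℝ) ^ (0 : ℤ) * ((p : ℝ) / (2 * l + 1) * nC l p q *
            (sg (m + 0) (n 2) * (dP (p - 1) (vP l)).eval (n 2)))) := by
      rw [← mul_assoc (eta _ _ _), etaP0 l p q m hp hq, hqr]
      have h1 := J1 l p (n 2)
      have h3 : (dP p (wP l)).eval (n 2) * n 2 = 1 / (2 * (l : ℝ) + 1) *
          ((2 * (l : ℝ) - p + 1) * (dP (p + 1) (wP (l + 1))).eval (n 2)
          + p * (dP (p - 1) (vP l)).eval (n 2)) := by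
        rw [← h1]; field_simp
      have h4 : sg 0 (n 2) = 1 := by simp [sg]
      have h5 : (-1 : ℝ) ^ (0 : ℤ) = 1 := by norm_num
      rw [h5, h4, add_zero]
      linear_combination (nC l p q * Real.sqrt (3 / (4 * π)) * sg m (n 2)) * h3
    have key' := congrArg (fun r : ℝ => (r : ℂ)) key
    push_cast at key' ⊢
    linear_combination (azi m n * azi 0 n) * key'
  · rw [mul_assoc (((-1 : ℝ) ^ (1 : ℤ) : ℝ) : ℂ), termMp l p q m n hp hq,
      sphHarmZ_pos (l + 1) (p + 2) q (m + 1) _ n (by push_cast; rfl) (by push_cast; omega)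
        (by push_cast; omega),
      sphHarm_eq' 1 2 0 1 n (by norm_num) (by norm_num), azi_add, ev2, nC2]
    have key : nC l p q * (sg m (n 2) * (dP p (wP l)).eval (n 2)) *
        (Real.sqrt (3 / (4 * π)) * Real.sqrt (1 / 2) * (sg 1 (n 2) * 1))
        = Real.sqrt (3 / (4 * π)) * (eta ((l : ℤ) + 1) m 1 * (nC (l + 1) (p + 2) q *
            (sg (m + 1) (n 2) * (dP (p + 2) (wP (l + 1))).eval (n 2)))
          + (-1 : ℝ) ^ (1 : ℤ) * (1 / (2 * l + 1) *
            (Real.sqrt (1 / 2) * nC l p q) *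
            (sg (m + 1) (n 2) * (dP p (vP l)).eval (n 2)))) := by
      rw [← mul_assoc (eta _ _ _), etaPp l p q m hp hq]
      have h1 := J2 l p (n 2)
      have h2 := rpow_step_up l p m hp (n 2) hx
      have h3 : (dP p (wP l)).eval (n 2) = 1 / (2 * (l : ℝ) + 1) *
          ((dP (p + 2) (wP (l + 1))).eval (n 2) - (dP p (vP l)).eval (n 2)) := by
        rw [← h1]; field_simp
      have h4 : sg m (n 2) * sg 1 (n 2) * (dP p (wP l)).eval (n 2)
          = sg (m + 1) (n 2) * (dP p (wP l)).eval (n 2) := by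
        unfold sg
        rw [hs]
        linear_combination ((-1 : ℝ) ^ m * (-1 : ℝ) ^ (1 : ℤ)) * h2
      have h5 : (-1 : ℝ) ^ (1 : ℤ) = -1 := by norm_num
      rw [h5]
      linear_combination (nC l p q * Real.sqrt (3 / (4 * π)) * Real.sqrt (1 / 2)) *
        (h4 + sg (m + 1) (n 2) * h3)
    have key' := congrArg (fun r : ℝ => (r : ℂ)) key
    push_cast at key' ⊢
    linear_combination (azi m n * azi 1 n) * key'
end
end

section
/- Let μ be a real number with μ > −1, let α, κ be real numbers, and let m, n be nonnegative integers. Then ∫_0^∞ L_m^{(α)}(s) L_n^{(κ)}(s) s^μ e^{−s} ds = (−1)^{m+n} Γ(μ+1) Σ_{i=0}^{min(m,n)} C(μ−α, m−i) C(μ−κ, n−i) C(i+μ, i), where C(x,k) = x(x−1)⋯(x−k+1)/k! denotes the generalized binomial coefficient. -/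
open MeasureTheory Real
open scoped BigOperators Classical

noncomputable section

lemma genBinom_eq_choose (x : ℝ) (k : ℕ) : genBinom x k = Ring.choose x k := by
  have h := Ring.descPochhammer_eq_factorial_smul_choose x k
  have h2 : (descPochhammer ℤ k).smeval x = ∏ j ∈ Finset.range k, (x - j) := by
    rw [← descPochhammer_eval_eq_prod_range, ← Polynomial.aeval_eq_smeval,
      ← descPochhammer_map (Int.castRingHom ℝ), Polynomial.eval_map]
    rfl
  rw [h2, nsmul_eq_mul] at h
  have : (k.factorial : ℝ) ≠ 0 := by positivity
  rw [genBinom, h]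
  field_simp

lemma genBinom_neg (x : ℝ) (k : ℕ) : genBinom (-x) k = (-1) ^ k * genBinom (x + k - 1) k := by
  unfold genBinom
  rw [← mul_div_assoc]
  congr 1
  rw [← Finset.prod_range_reflect]
  have : (-1 : ℝ) ^ k = ∏ j ∈ Finset.range k, (-1 : ℝ) := by simp
  rw [this, ← Finset.prod_mul_distrib]
  refine Finset.prod_congr rfl fun j hj => ?_
  have hj := Finset.mem_range.1 hj
  rw [Nat.sub_sub, Nat.cast_sub (by omega)]
  push_cast
  ring

lemma genBinom_add (x y : ℝ) (k : ℕ) :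
    genBinom (x + y) k = ∑ i ∈ Finset.range (k + 1), genBinom x (k - i) * genBinom y i := by
  simp only [genBinom_eq_choose]
  rw [add_comm, Ring.add_choose_eq k (Commute.all _ _),
    Finset.Nat.sum_antidiagonal_eq_sum_range_succ_mk]
  exact Finset.sum_congr rfl fun i _ => mul_comm _ _

def lagC (n : ℕ) (β : ℝ) (j : ℕ) : ℝ :=
  (-1) ^ j / j.factorial * genBinom (n + β) (n - j)

def lagP (n : ℕ) (β : ℝ) : Polynomial ℝ :=
  ∑ j ∈ Finset.range (n + 1), lagC n β j • (Polynomial.X ^ j)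

lemma laguerre_eq (n : ℕ) (β x : ℝ) (hx : 0 < x) :
    laguerre n β x = (lagP n β).eval x := by
  unfold laguerre lagP
  have h1 : ∀ p : ℝ, ContDiffAt ℝ n (fun y : ℝ => y ^ p) x := fun p =>
    Real.contDiffAt_rpow_const (Or.inl hx.ne')
  have h2 : ContDiffAt ℝ n (fun y : ℝ => Real.exp (-y)) x := by fun_prop
  rw [iteratedDeriv_fun_mul (h1 _) h2, Polynomial.eval_finsetSum,
    ← Finset.sum_range_reflect, Finset.mul_sum]
  refine Finset.sum_congr rfl fun j hj => ?_
  have hj : j ≤ n := Nat.lt_succ_iff.1 (Finset.mem_range.1 hj)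
  have h3 : (fun y : ℝ => Real.exp (-y)) = fun y => Real.exp ((-1) * y) := by
    ext y; simp
  have e : n + 1 - 1 - j = n - j := by omega
  have e2 : n - (n - j) = j := by omega
  rw [iteratedDeriv_eq_iterate, Real.iter_deriv_rpow_const, h3, iteratedDeriv_exp_const_mul,
    e, e2, descPochhammer_eval_eq_prod_range]
  simp only [Polynomial.eval_smul, Polynomial.eval_pow, Polynomial.eval_X, smul_eq_mul, lagC,
    genBinom]
  rw [Nat.cast_choose ℝ (Nat.sub_le n j), e2, Nat.cast_sub hj]
  have e3 : (n : ℝ) + β - ((n : ℝ) - j) = β + j := by ring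
  have f1 : (n.factorial : ℝ) ≠ 0 := by positivity
  have f2 : (j.factorial : ℝ) ≠ 0 := by positivity
  have f3 : ((n-j).factorial : ℝ) ≠ 0 := by positivity
  rw [e3, Real.rpow_add hx, Real.rpow_natCast, Real.rpow_neg hx.le, neg_one_mul, Real.exp_neg]
  have f4 : x ^ β ≠ 0 := (Real.rpow_pos_of_pos hx β).ne'
  have f5 := Real.exp_ne_zero x
  field_simp

lemma connection (μ a : ℝ) (n : ℕ) :
    lagP n a = ∑ i ∈ Finset.range (n + 1),
      ((-1) ^ (n - i) * genBinom (μ - a) (n - i)) • lagP i μ := by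
  unfold lagP
  simp only [Finset.smul_sum]
  simp only [Finset.range_eq_Ico]
  rw [← Finset.sum_Ico_Ico_comm]
  refine Finset.sum_congr rfl fun j hj => ?_
  have hj : j ≤ n := Nat.lt_succ_iff.1 (Finset.mem_Ico.1 hj).2
  simp only [smul_smul]
  rw [← Finset.sum_smul]
  congr 1
  rw [Finset.sum_Ico_eq_sum_range]
  obtain ⟨d, rfl⟩ := Nat.exists_eq_add_of_le hj
  have e : j + d + 1 - j = d + 1 := by omega
  rw [e]
  unfold lagC
  have h := genBinom_neg (a + j + 1) d
  have e1 : j + d - j = d := by omega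
  have e2 : -(a + j + 1) = (μ - a) + (-(μ + j + 1)) := by ring
  have e3 : a + j + 1 + d - 1 = ((j + d : ℕ) : ℝ) + a := by push_cast; ring
  rw [e1]
  rw [e2, genBinom_add, e3] at h
  have h' : genBinom (((j + d : ℕ) : ℝ) + a) d = (-1) ^ d * ∑ i ∈ Finset.range (d + 1),
      genBinom (μ - a) (d - i) * genBinom (-(μ + j + 1)) i := by
    rw [h, ← mul_assoc, ← pow_add, Even.neg_one_pow ⟨d, rfl⟩, one_mul]
  rw [h', Finset.mul_sum, Finset.mul_sum]
  refine Finset.sum_congr rfl fun i hi => ?_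
  have hi : i ≤ d := Nat.lt_succ_iff.1 (Finset.mem_range.1 hi)
  rw [genBinom_neg]
  have e4 : j + d - (j + i) = d - i := by omega
  have e5 : j + i - j = i := by omega
  have e6 : μ + j + 1 + i - 1 = ((j + i : ℕ) : ℝ) + μ := by push_cast; ring
  rw [e4, e5, e6]
  obtain ⟨c, rfl⟩ := Nat.exists_eq_add_of_le hi
  have e7 : i + c - i = c := by omega
  have e8 : ((-1 : ℝ) ^ i) * (-1) ^ i = 1 := by rw [← pow_add, Even.neg_one_pow ⟨i, rfl⟩]
  rw [e7, pow_add (-1 : ℝ) i c]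
  linear_combination ((-1) ^ j / (j.factorial : ℝ) * (-1) ^ c * genBinom (μ - a) c *
    genBinom (((j + i : ℕ) : ℝ) + μ) i) * e8

lemma int_mono (μ : ℝ) (hμ : μ > -1) (j : ℕ) :
    IntegrableOn (fun s : ℝ => s ^ j * (s ^ μ * Real.exp (-s))) (Set.Ioi 0) ∧
    ∫ s in Set.Ioi (0 : ℝ), s ^ j * (s ^ μ * Real.exp (-s)) = Real.Gamma (μ + j + 1) := by
  have hp : 0 < μ + j + 1 := by
    have : (0 : ℝ) ≤ j := Nat.cast_nonneg j
    linarith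
  have key : ∀ s ∈ Set.Ioi (0 : ℝ), Real.exp (-s) * s ^ (μ + j + 1 - 1) =
      s ^ j * (s ^ μ * Real.exp (-s)) := by
    intro s hs
    rw [add_sub_cancel_right, Real.rpow_add hs, Real.rpow_natCast]
    ring
  refine ⟨(Real.GammaIntegral_convergent hp).congr_fun key measurableSet_Ioi, ?_⟩
  rw [Real.Gamma_eq_integral hp]
  exact (setIntegral_congr_fun measurableSet_Ioi key).symm

lemma int_poly (μ : ℝ) (hμ : μ > -1) (p : Polynomial ℝ) :
    IntegrableOn (fun s : ℝ => p.eval s * (s ^ μ * Real.exp (-s))) (Set.Ioi 0) := by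
  induction p using Polynomial.induction_on' with
  | add p q hp hq =>
    simp only [Polynomial.eval_add, add_mul]
    exact hp.add hq
  | monomial n a =>
    simp only [Polynomial.eval_monomial, mul_assoc]
    exact (int_mono μ hμ n).1.const_mul a

def lagE (μ : ℝ) (hμ : μ > -1) : Polynomial ℝ →ₗ[ℝ] ℝ where
  toFun p := ∫ s in Set.Ioi (0 : ℝ), p.eval s * (s ^ μ * Real.exp (-s))
  map_add' p q := by
    simp only [Polynomial.eval_add, add_mul]
    exact integral_add (int_poly μ hμ p) (int_poly μ hμ q)
  map_smul' c p := by
    simp only [Polynomial.eval_smul, smul_eq_mul, mul_assoc, RingHom.id_apply]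
    exact integral_const_mul _ _

lemma lagE_X_pow (μ : ℝ) (hμ : μ > -1) (j : ℕ) :
    lagE μ hμ (Polynomial.X ^ j) = Real.Gamma (μ + j + 1) := by
  simpa [lagE] using (int_mono μ hμ j).2

lemma Gamma_shift (x : ℝ) (hx : 0 < x) (j : ℕ) :
    Real.Gamma (x + j) = (ascPochhammer ℝ j).eval x * Real.Gamma x := by
  induction j with
  | zero => simp
  | succ j ih =>
    have : x + j ≠ 0 := by positivity
    rw [Nat.cast_succ, ← add_assoc, Real.Gamma_add_one this, ih, ascPochhammer_succ_eval]
    ring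

lemma Gamma_genBinom (μ : ℝ) (hμ : μ > -1) (l d : ℕ) :
    genBinom (((l + d : ℕ) : ℝ) + μ) d * Real.Gamma (μ + l + 1) =
      Real.Gamma (μ + (l + d : ℕ) + 1) / d.factorial := by
  have hp : 0 < μ + l + 1 := by
    have : (0 : ℝ) ≤ l := Nat.cast_nonneg l
    linarith
  have h := Gamma_shift _ hp d
  have e : μ + l + 1 + d = μ + (l + d : ℕ) + 1 := by push_cast; ring
  rw [e] at h
  rw [h, genBinom, div_mul_eq_mul_div]
  congr 2
  rw [← descPochhammer_eval_eq_prod_range, descPochhammer_eval_eq_ascPochhammer]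
  congr 1
  push_cast; ring

lemma orth_aux (μ : ℝ) (hμ : μ > -1) (i j : ℕ) (hj : j ≤ i) :
    lagE μ hμ (Polynomial.X ^ j * lagP i μ) =
      if j = i then (-1) ^ i * Real.Gamma (μ + i + 1) else 0 := by
  set P : Polynomial ℝ := (ascPochhammer ℝ j).comp (Polynomial.X + Polynomial.C (μ + 1)) with hP
  have mP : P.Monic := (monic_ascPochhammer ℝ j).comp_X_add_C _
  have dP : P.natDegree = j := by
    simp only [P, Polynomial.natDegree_comp, ascPochhammer_natDegree, mul_one,
      Polynomial.natDegree_X_add_C]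
  have hf := fwdDiff_iter_eq_sum_shift (1 : ℝ) P.eval i 0
  have h1 : lagE μ hμ (Polynomial.X ^ j * lagP i μ) =
      (-1) ^ i * Real.Gamma (μ + i + 1) / i.factorial * (fwdDiff (1 : ℝ))^[i] P.eval 0 := by
    rw [hf, lagP, Finset.mul_sum, map_sum, Finset.mul_sum]
    refine Finset.sum_congr rfl fun l hl => ?_
    have hl : l ≤ i := Nat.lt_succ_iff.1 (Finset.mem_range.1 hl)
    obtain ⟨d, rfl⟩ := Nat.exists_eq_add_of_le hl
    rw [mul_smul_comm, ← pow_add, map_smul, lagE_X_pow]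
    have hp : 0 < μ + l + 1 := by
      have : (0 : ℝ) ≤ l := Nat.cast_nonneg l
      linarith
    have g := Gamma_shift _ hp j
    have e : μ + l + 1 + j = μ + (j + l : ℕ) + 1 := by push_cast; ring
    have ep : P.eval (0 + l • (1 : ℝ)) = (ascPochhammer ℝ j).eval (μ + l + 1) := by
      simp only [P, Polynomial.eval_comp, Polynomial.eval_add, Polynomial.eval_X,
        Polynomial.eval_C]
      congr 1
      simp; ring
    have gb := Gamma_genBinom μ hμ l d
    rw [e] at g
    rw [g, ep, lagC]
    have e1 : l + d - l = d := by omega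
    have e8 : ((-1 : ℝ) ^ d) * (-1) ^ d = 1 := by rw [← pow_add, Even.neg_one_pow ⟨d, rfl⟩]
    rw [e1, zsmul_eq_mul, smul_eq_mul]
    push_cast
    rw [Nat.cast_add_choose ℝ, pow_add (-1 : ℝ) l d]
    have f1 : ((l+d).factorial : ℝ) ≠ 0 := by positivity
    have f2 : (l.factorial : ℝ) ≠ 0 := by positivity
    have f3 : (d.factorial : ℝ) ≠ 0 := by positivity
    push_cast at gb
    calc _ = (-1) ^ l / (l.factorial : ℝ) * (genBinom (l + d + μ) d * Real.Gamma (μ + l + 1))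
          * (ascPochhammer ℝ j).eval (μ + l + 1) := by ring
      _ = (-1) ^ l / (l.factorial : ℝ) * (Real.Gamma (μ + (l + d) + 1) / d.factorial) * ((-1 : ℝ) ^ d * (-1) ^ d)
          * (ascPochhammer ℝ j).eval (μ + l + 1) := by rw [gb, e8, mul_one]
      _ = _ := by field_simp
  rw [h1]
  split_ifs with h
  · subst h
    have := congrFun (Polynomial.fwdDiff_iter_degree_eq_factorial P) 0
    rw [dP, mP.leadingCoeff] at this
    rw [this]
    have f1 : (j.factorial : ℝ) ≠ 0 := by positivity
    simp
    field_simp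
  · have := congrFun (Polynomial.fwdDiff_iter_eq_zero_of_degree_lt (P := P) (n := i) (by omega)) 0
    rw [this]
    simp

lemma orth_le (μ : ℝ) (hμ : μ > -1) (i j : ℕ) (hj : j ≤ i) :
    lagE μ hμ (lagP j μ * lagP i μ) =
      if j = i then Real.Gamma (μ + 1) * genBinom (i + μ) i else 0 := by
  conv_lhs => rw [lagP, Finset.sum_mul, map_sum]
  simp only [smul_mul_assoc, map_smul, smul_eq_mul]
  have : ∀ l ∈ Finset.range (j + 1), lagC j μ l * lagE μ hμ (Polynomial.X ^ l * lagP i μ) =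
      if l = i then lagC j μ i * ((-1) ^ i * Real.Gamma (μ + i + 1)) else 0 := by
    intro l hl
    have hl : l ≤ j := Nat.lt_succ_iff.1 (Finset.mem_range.1 hl)
    rw [orth_aux μ hμ i l (hl.trans hj)]
    split_ifs with h
    · rw [h]
    · simp
  rw [Finset.sum_congr rfl this, Finset.sum_ite_eq']
  have e : i ∈ Finset.range (j + 1) ↔ j = i := by rw [Finset.mem_range]; omega
  simp only [e]
  split_ifs with h
  · subst h
    have gb := Gamma_genBinom μ hμ 0 j
    have e8 : ((-1 : ℝ) ^ j) * (-1) ^ j = 1 := by rw [← pow_add, Even.neg_one_pow ⟨j, rfl⟩]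
    simp only [zero_add, Nat.cast_zero, add_zero] at gb
    rw [mul_comm (Real.Gamma _), gb, lagC, Nat.sub_self]
    have : genBinom (j + μ) 0 = 1 := by simp [genBinom]
    rw [this]
    linear_combination (Real.Gamma (μ + j + 1) / j.factorial) * e8
  · rfl

lemma orth (μ : ℝ) (hμ : μ > -1) (i j : ℕ) :
    lagE μ hμ (lagP i μ * lagP j μ) =
      if i = j then Real.Gamma (μ + 1) * genBinom (i + μ) i else 0 := by
  rcases le_total i j with h | h
  · rw [orth_le μ hμ j i h]
    split_ifs with h
    · rw [h]
    · rfl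
  · rw [mul_comm, orth_le μ hμ i j h]
    simp only [eq_comm]

/-- the weighted integral of a product of two Laguerre polynomials. -/
theorem laguerre_product_integral (μ a k : ℝ) (hμ : μ > -1) (m n : ℕ) :
    (∫ s in Set.Ioi (0 : ℝ), laguerre m a s * laguerre n k s * s ^ μ * Real.exp (-s)) =
      (-1 : ℝ) ^ (m + n) * Real.Gamma (μ + 1) *
        ∑ i ∈ Finset.range (min m n + 1),
          genBinom (μ - a) (m - i) * genBinom (μ - k) (n - i) * genBinom ((i : ℝ) + μ) i := by
  have h0 : (∫ s in Set.Ioi (0 : ℝ), laguerre m a s * laguerre n k s * s ^ μ * Real.exp (-s)) =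
      lagE μ hμ (lagP m a * lagP n k) := by
    refine setIntegral_congr_fun measurableSet_Ioi fun s hs => ?_
    simp only [laguerre_eq _ _ _ hs, Polynomial.eval_mul]
    ring
  rw [h0, connection μ a m, connection μ k n, Finset.sum_mul_sum, map_sum]
  simp only [map_sum, smul_mul_assoc, mul_smul_comm, map_smul, smul_eq_mul, orth, mul_ite,
    mul_zero, Finset.sum_ite_eq]
  rw [← Finset.sum_filter, Finset.mul_sum]
  have hs : (Finset.range (m + 1)).filter (fun i => i ∈ Finset.range (n + 1)) =
      Finset.range (min m n + 1) := by
    ext i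
    simp only [Finset.mem_filter, Finset.mem_range]
    omega
  rw [hs]
  refine Finset.sum_congr rfl fun i hi => ?_
  have hi := Finset.mem_range.1 hi
  obtain ⟨c, rfl⟩ := Nat.exists_eq_add_of_le (show i ≤ m by omega)
  obtain ⟨d, rfl⟩ := Nat.exists_eq_add_of_le (show i ≤ n by omega)
  have e1 : i + c - i = c := by omega
  have e2 : i + d - i = d := by omega
  have e3 : (-1 : ℝ) ^ (i + c + (i + d)) = (-1) ^ c * (-1) ^ d := by
    rw [show i + c + (i + d) = (i + i) + (c + d) by ring, pow_add, Even.neg_one_pow ⟨i, rfl⟩,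
      one_mul, pow_add]
  rw [e1, e2, e3]
  ring
end
end

section
/- Let γ > −5 and Λ > 0. For all multi-indices α, λ, κ ∈ ℕ³ with |α| ≥ 1, the coefficient A_α^{λ,κ} := (1/α!) ∫_{ℝ³} H^α(v) ∇_v·∫_{ℝ³} A(v−v*) ( H^λ(v*)M(v*) ∇_v(H^κ(v)M(v)) − H^λ(v)M(v) ∇_{v*}(H^κ(v*)M(v*)) ) dv* dv can be rewritten, after integration by parts, as A_α^{λ,κ} = Σ_{s,t=1}^{3} (Λ/(α−e_s)!) ∫_{ℝ³×ℝ³} |v−v*|^γ ( δ_{st}|v−v*|² − (v−v*)_s (v−v*)_t ) H^{α−e_s}(v) M(v) M(v*) ( H^λ(v*) H^{κ+e_t}(v) − H^λ(v) H^{κ+e_t}(v*) ) dv dv*, where terms with α_s = 0 are omitted and e_s is the s-th unit multi-index. -/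
open MeasureTheory Real
open scoped BigOperators Classical

noncomputable section

/-- One-dimensional Hermite polynomial. -/
def he (n : ℕ) (x : ℝ) : ℝ := Polynomial.aeval x (Polynomial.hermite n)

/-- Normalising constant. -/
def cM : ℝ := (2 * π) ^ (-(3 : ℝ) / 2)

/-- One-dimensional Hermite function. -/
def hg (n : ℕ) (x : ℝ) : ℝ := he n x * Real.exp (-(x ^ 2 / 2))

lemma cM_pos : 0 < cM := by unfold cM; positivity

lemma Mxw_eq (v : V3) :
    Mxw v = cM * (Real.exp (-(v 0 ^ 2 / 2)) * Real.exp (-(v 1 ^ 2 / 2)) *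
      Real.exp (-(v 2 ^ 2 / 2))) := by
  unfold Mxw cM
  rw [← Real.exp_add, ← Real.exp_add, Fin.sum_univ_three]
  congr 2; ring

lemma Mxw_pos (v : V3) : 0 < Mxw v := by
  unfold Mxw; positivity

lemma iter_gauss (n : ℕ) (c x : ℝ) :
    iteratedDeriv n (fun y => c * Real.exp (-(y ^ 2 / 2))) x = c * ((-1) ^ n * hg n x) := by
  rw [iteratedDeriv_const_mul_field, iteratedDeriv_eq_iterate,
    Polynomial.deriv_gaussian_eq_hermite_mul_gaussian]
  simp [hg, he, mul_assoc]

lemma Herm_mul_Mxw (α : Fin 3 → ℕ) (v : V3) :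
    Herm α v * Mxw v = cM * (hg (α 0) (v 0) * hg (α 1) (v 1) * hg (α 2) (v 2)) := by
  have hM := (Mxw_pos v).ne'
  have h1 : ∀ x1 x2 : ℝ, iteratedDeriv (α 2) (fun x3 => Mxw ![x1, x2, x3]) (v 2)
      = (cM * Real.exp (-(x1 ^ 2 / 2)) * ((-1) ^ (α 2) * hg (α 2) (v 2))) *
        Real.exp (-(x2 ^ 2 / 2)) := by
    intro x1 x2
    have : (fun x3 => Mxw ![x1, x2, x3]) = fun x3 : ℝ =>
        (cM * Real.exp (-(x1 ^ 2 / 2)) * Real.exp (-(x2 ^ 2 / 2))) * Real.exp (-(x3 ^ 2 / 2)) := by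
      funext x3
      rw [Mxw_eq]; simp; ring
    rw [this, iter_gauss]; ring
  have h2 : ∀ x1 : ℝ, iteratedDeriv (α 1) (fun x2 =>
        iteratedDeriv (α 2) (fun x3 => Mxw ![x1, x2, x3]) (v 2)) (v 1)
      = (cM * ((-1) ^ (α 2) * hg (α 2) (v 2)) * ((-1) ^ (α 1) * hg (α 1) (v 1))) *
        Real.exp (-(x1 ^ 2 / 2)) := by
    intro x1
    simp_rw [h1]
    rw [iter_gauss]; ring
  unfold Herm
  simp_rw [h2]
  rw [iter_gauss]
  unfold degIdx
  field_simp
  have : ((-1 : ℝ) ^ (α 0 + α 1 + α 2)) * (-1) ^ (α 2) * (-1) ^ (α 1) * (-1) ^ (α 0) = 1 := by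
    rw [show ((-1 : ℝ) ^ (α 0 + α 1 + α 2)) * (-1) ^ (α 2) * (-1) ^ (α 1) * (-1) ^ (α 0)
      = ((-1) ^ (α 0 + α 1 + α 2)) ^ 2 by ring, ← pow_mul, mul_comm, pow_mul]
    simp
  linear_combination (cM * hg (α 0) (v 0) * hg (α 1) (v 1) * hg (α 2) (v 2)) * this

lemma Herm_eq (α : Fin 3 → ℕ) (v : V3) :
    Herm α v = he (α 0) (v 0) * he (α 1) (v 1) * he (α 2) (v 2) := by
  have hM := (Mxw_pos v).ne'
  apply mul_right_cancel₀ hM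
  rw [Herm_mul_Mxw, Mxw_eq]; unfold hg; ring

lemma derivative_hermite (n : ℕ) :
    Polynomial.derivative (Polynomial.hermite n) = (n : ℤ) • Polynomial.hermite (n - 1) := by
  induction n with
  | zero => simp
  | succ n ih =>
    cases n with
    | zero => simp
    | succ m =>
      rw [Polynomial.hermite_succ (m + 1), Polynomial.derivative_sub, Polynomial.derivative_mul, ih]
      simp only [Nat.add_sub_cancel, Polynomial.derivative_X, Polynomial.derivative_smul]
      simp only [Polynomial.hermite_succ m]
      push_cast
      simp only [zsmul_eq_mul]; push_cast
      ring

lemma hasDerivAt_he (n : ℕ) (x : ℝ) : HasDerivAt (he n) (n * he (n - 1) x) x := by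
  have := (Polynomial.hermite n).hasDerivAt_aeval x
  rw [derivative_hermite] at this
  have h2 : HasDerivAt (he n) (Polynomial.aeval x ((n : ℤ) • Polynomial.hermite (n - 1))) x := this
  have h3 : Polynomial.aeval x ((n : ℤ) • Polynomial.hermite (n - 1)) = n * he (n - 1) x := by
    simp [he]
  rwa [h3] at h2

lemma he_succ (n : ℕ) (x : ℝ) : he (n + 1) x = x * he n x - n * he (n - 1) x := by
  unfold he
  rw [Polynomial.hermite_succ, derivative_hermite]; simp

lemma hasDerivAt_hg (n : ℕ) (x : ℝ) : HasDerivAt (hg n) (-hg (n + 1) x) x := by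
  have h2 : HasDerivAt (fun x : ℝ => Real.exp (-(x ^ 2 / 2)))
      (Real.exp (-(x ^ 2 / 2)) * (-x)) x := by
    apply HasDerivAt.exp
    have := (((hasDerivAt_id x).pow 2).div_const 2).neg
    refine this.congr_deriv ?_
    simp
  have := (hasDerivAt_he n x).mul h2
  refine this.congr_deriv ?_
  unfold hg; rw [he_succ]; ring

lemma poly_bound (p : Polynomial ℤ) : ∃ C : ℝ, ∃ N : ℕ, 0 ≤ C ∧
    ∀ x : ℝ, |Polynomial.aeval x p| ≤ C * (1 + |x|) ^ N := by
  induction p using Polynomial.induction_on' with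
  | add p q hp hq =>
    obtain ⟨C, N, hC, h⟩ := hp
    obtain ⟨D, M, hD, h'⟩ := hq
    refine ⟨C + D, N + M, by positivity, fun x => ?_⟩
    have hx : 1 ≤ 1 + |x| := by simp
    rw [map_add]
    calc _ ≤ _ := abs_add_le _ _
      _ ≤ C * (1 + |x|) ^ N + D * (1 + |x|) ^ M := add_le_add (h x) (h' x)
      _ ≤ C * (1 + |x|) ^ (N + M) + D * (1 + |x|) ^ (N + M) := by
        gcongr <;> omega
      _ = _ := by ring
  | monomial n a =>
    refine ⟨|(a : ℝ)|, n, abs_nonneg _, fun x => ?_⟩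
    rw [Polynomial.aeval_monomial]
    simp only [abs_mul, abs_pow, eq_intCast]
    gcongr
    linarith

lemma he_bound (n : ℕ) : ∃ C : ℝ, ∃ N : ℕ, 0 ≤ C ∧ ∀ x : ℝ, |he n x| ≤ C * (1 + |x|) ^ N :=
  poly_bound _

lemma gauss_bound (N : ℕ) (x : ℝ) :
    Real.exp (-(x ^ 2 / 2)) * (1 + |x|) ^ N ≤ N.factorial * Real.exp (3 / 2) := by
  have h1 := Real.pow_div_factorial_le_exp (1 + |x|) (by positivity) N
  have hN : (0 : ℝ) < N.factorial := by positivity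
  rw [div_le_iff₀ hN] at h1
  calc _ ≤ Real.exp (-(x ^ 2 / 2)) * (Real.exp (1 + |x|) * N.factorial) := by gcongr
    _ = N.factorial * Real.exp (-(x ^ 2 / 2) + (1 + |x|)) := by rw [Real.exp_add (-(x ^ 2 / 2))]; ring
    _ ≤ _ := by
      gcongr
      rw [← sq_abs]
      nlinarith [sq_nonneg (|x| - 1)]

lemma hg_bound (n N : ℕ) : ∃ C : ℝ, 0 ≤ C ∧ ∀ x : ℝ, |hg n x| * (1 + |x|) ^ N ≤ C := by
  obtain ⟨C, M, hC, h⟩ := he_bound n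
  refine ⟨C * ((M + N).factorial * Real.exp (3 / 2)), by positivity, fun x => ?_⟩
  unfold hg
  rw [abs_mul, abs_of_pos (Real.exp_pos _)]
  calc _ ≤ C * (1 + |x|) ^ M * Real.exp (-(x ^ 2 / 2)) * (1 + |x|) ^ N := by
        gcongr; exact h x
    _ = C * (Real.exp (-(x ^ 2 / 2)) * (1 + |x|) ^ (M + N)) := by ring
    _ ≤ _ := mul_le_mul_of_nonneg_left (gauss_bound _ _) hC

/-- Hermite function `H^κ M`. -/
def G (κ : Fin 3 → ℕ) (v : V3) : ℝ := Herm κ v * Mxw v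

lemma G_eq (κ : Fin 3 → ℕ) (v : V3) :
    G κ v = cM * (hg (κ 0) (v 0) * hg (κ 1) (v 1) * hg (κ 2) (v 2)) := Herm_mul_Mxw κ v

lemma one_add_norm_le (v : V3) : 1 + ‖v‖ ≤ (1 + |v 0|) * (1 + |v 1|) * (1 + |v 2|) := by
  have h0 := abs_nonneg (v 0)
  have h1 := abs_nonneg (v 1)
  have h2 := abs_nonneg (v 2)
  have : ‖v‖ ≤ |v 0| + |v 1| + |v 2| := by
    rw [pi_norm_le_iff_of_nonneg (by positivity)]
    intro i
    rw [Real.norm_eq_abs]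
    fin_cases i <;> simp <;> linarith
  nlinarith [mul_nonneg h0 h1, mul_nonneg h0 h2, mul_nonneg h1 h2, mul_nonneg (mul_nonneg h0 h1) h2]

lemma abs_le_norm (v : V3) (i : Fin 3) : |v i| ≤ ‖v‖ := norm_le_pi_norm v i

lemma G_bound (κ : Fin 3 → ℕ) (N : ℕ) : ∃ C : ℝ, 0 ≤ C ∧ ∀ v, |G κ v| * (1 + ‖v‖) ^ N ≤ C := by
  obtain ⟨C0, hC0, h0⟩ := hg_bound (κ 0) N
  obtain ⟨C1, hC1, h1⟩ := hg_bound (κ 1) N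
  obtain ⟨C2, hC2, h2⟩ := hg_bound (κ 2) N
  have hc := cM_pos
  refine ⟨cM * (C0 * C1 * C2), by positivity, fun v => ?_⟩
  rw [G_eq]
  simp only [abs_mul, abs_of_pos hc]
  calc _ ≤ cM * (|hg (κ 0) (v 0)| * |hg (κ 1) (v 1)| * |hg (κ 2) (v 2)|) *
        ((1 + |v 0|) * (1 + |v 1|) * (1 + |v 2|)) ^ N := by
        gcongr; exact one_add_norm_le v
    _ = cM * ((|hg (κ 0) (v 0)| * (1 + |v 0|) ^ N) * (|hg (κ 1) (v 1)| * (1 + |v 1|) ^ N) *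
        (|hg (κ 2) (v 2)| * (1 + |v 2|) ^ N)) := by rw [mul_pow, mul_pow]; ring
    _ ≤ _ := by
      gcongr
      · exact h0 _
      · exact h1 _
      · exact h2 _

lemma Herm_bound (α : Fin 3 → ℕ) : ∃ C : ℝ, ∃ N : ℕ, 0 ≤ C ∧
    ∀ v, |Herm α v| ≤ C * (1 + ‖v‖) ^ N := by
  obtain ⟨C0, N0, hC0, h0⟩ := he_bound (α 0)
  obtain ⟨C1, N1, hC1, h1⟩ := he_bound (α 1)
  obtain ⟨C2, N2, hC2, h2⟩ := he_bound (α 2)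
  refine ⟨C0 * C1 * C2, N0 + N1 + N2, by positivity, fun v => ?_⟩
  rw [Herm_eq, abs_mul, abs_mul]
  calc _ ≤ (C0 * (1 + |v 0|) ^ N0) * (C1 * (1 + |v 1|) ^ N1) * (C2 * (1 + |v 2|) ^ N2) := by
        gcongr
        · exact h0 _
        · exact h1 _
        · exact h2 _
    _ ≤ (C0 * (1 + ‖v‖) ^ N0) * (C1 * (1 + ‖v‖) ^ N1) * (C2 * (1 + ‖v‖) ^ N2) := by
        gcongr <;> exact abs_le_norm v _
    _ = _ := by ring

/-- Derivative of `G κ`. -/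
def DG (κ : Fin 3 → ℕ) (v : V3) : V3 →L[ℝ] ℝ :=
  ∑ t : Fin 3, (-(G (κ + Pi.single t 1) v)) • ContinuousLinearMap.proj (R := ℝ) t

lemma DG_apply (κ : Fin 3 → ℕ) (v : V3) (t : Fin 3) :
    DG κ v (Pi.single t 1) = -G (κ + Pi.single t 1) v := by
  unfold DG
  rw [Fin.sum_univ_three]
  fin_cases t <;> simp

lemma hasFDerivAt_coord {f : ℝ → ℝ} {f' : ℝ} (i : Fin 3) (v : V3) (h : HasDerivAt f f' (v i)) :
    HasFDerivAt (fun w : V3 => f (w i)) (f' • (ContinuousLinearMap.proj (R := ℝ) i : V3 →L[ℝ] ℝ)) v :=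
  h.comp_hasFDerivAt v (ContinuousLinearMap.proj (R := ℝ) i : V3 →L[ℝ] ℝ).hasFDerivAt

lemma hasFDerivAt_G (κ : Fin 3 → ℕ) (v : V3) : HasFDerivAt (G κ) (DG κ v) v := by
  have h := ((((hasFDerivAt_coord 0 v (hasDerivAt_hg (κ 0) (v 0))).mul
    (hasFDerivAt_coord 1 v (hasDerivAt_hg (κ 1) (v 1)))).mul
    (hasFDerivAt_coord 2 v (hasDerivAt_hg (κ 2) (v 2))))).const_mul cM
  have e : G κ = fun w => cM * (hg (κ 0) (w 0) * hg (κ 1) (w 1) * hg (κ 2) (w 2)) :=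
    funext (G_eq κ)
  rw [e]
  refine h.congr_fderiv ?_
  ext w
  simp only [DG, Fin.sum_univ_three, G_eq]
  simp
  ring

lemma hasFDerivAt_Herm (α : Fin 3 → ℕ) (v : V3) : DifferentiableAt ℝ (Herm α) v ∧
    ∀ s, fderiv ℝ (Herm α) v (Pi.single s 1) = α s * Herm (α - Pi.single s 1) v := by
  have h := ((((hasFDerivAt_coord 0 v (hasDerivAt_he (α 0) (v 0))).mul
    (hasFDerivAt_coord 1 v (hasDerivAt_he (α 1) (v 1)))).mul
    (hasFDerivAt_coord 2 v (hasDerivAt_he (α 2) (v 2)))))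
  have e : Herm α = fun w => (he (α 0) (w 0) * he (α 1) (w 1) * he (α 2) (w 2)) :=
    funext (Herm_eq α)
  rw [e]
  refine ⟨h.differentiableAt, fun s => ?_⟩
  erw [h.fderiv]
  rw [Herm_eq]
  fin_cases s <;> simp <;> ring

lemma continuous_G (κ : Fin 3 → ℕ) : Continuous (G κ) :=
  continuous_iff_continuousAt.2 fun v => (hasFDerivAt_G κ v).continuousAt

lemma continuous_Herm (κ : Fin 3 → ℕ) : Continuous (Herm κ) :=
  continuous_iff_continuousAt.2 fun v => (hasFDerivAt_Herm κ v).1.continuousAt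

lemma continuous_DG (κ : Fin 3 → ℕ) : Continuous (DG κ) := by
  unfold DG
  refine continuous_finsetSum _ fun t _ => ?_
  exact (continuous_G _).neg.smul continuous_const

lemma pd_G (κ : Fin 3 → ℕ) (t : Fin 3) (v : V3) : pd t (G κ) v = -G (κ + Pi.single t 1) v := by
  unfold pd; rw [(hasFDerivAt_G κ v).fderiv, DG_apply]

lemma DG_norm_le (κ : Fin 3 → ℕ) (v : V3) : ‖DG κ v‖ ≤ ∑ t : Fin 3, |G (κ + Pi.single t 1) v| := by
  refine ContinuousLinearMap.opNorm_le_bound _ (by positivity) fun w => ?_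
  unfold DG
  rw [_root_.sum_apply, Finset.sum_mul]
  refine (norm_sum_le _ _).trans (Finset.sum_le_sum fun t _ => ?_)
  simp only [_root_.smul_apply, ContinuousLinearMap.proj_apply, smul_eq_mul, norm_mul,
    norm_neg, Real.norm_eq_abs]
  gcongr
  exact abs_le_norm w t

lemma DG_bound (κ : Fin 3 → ℕ) (N : ℕ) : ∃ C : ℝ, 0 ≤ C ∧ ∀ v, ‖DG κ v‖ * (1 + ‖v‖) ^ N ≤ C := by
  choose C hC h using fun t : Fin 3 => G_bound (κ + Pi.single t 1) N
  refine ⟨∑ t, C t, Finset.sum_nonneg fun t _ => hC t, fun v => ?_⟩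
  calc _ ≤ (∑ t : Fin 3, |G (κ + Pi.single t 1) v|) * (1 + ‖v‖) ^ N := by
        gcongr; exact DG_norm_le κ v
    _ = ∑ t : Fin 3, |G (κ + Pi.single t 1) v| * (1 + ‖v‖) ^ N := by rw [Finset.sum_mul]
    _ ≤ _ := Finset.sum_le_sum fun t _ => h t v

lemma peetre (w g : V3) : 1 + ‖g‖ ≤ (1 + ‖w‖) * (1 + ‖w - g‖) := by
  have h : ‖g‖ ≤ ‖w‖ + ‖w - g‖ := by
    calc ‖g‖ = ‖w - (w - g)‖ := by simp
      _ ≤ _ := norm_sub_le _ _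
  nlinarith [norm_nonneg w, norm_nonneg (w - g), mul_nonneg (norm_nonneg w) (norm_nonneg (w - g))]

/-- The inverse polynomial weight. -/
def wt (N : ℕ) (g : V3) : ℝ := ((1 + ‖g‖) ^ N)⁻¹

lemma wt_pos (N : ℕ) (g : V3) : 0 < wt N g := by unfold wt; positivity

lemma shift_bound {X C : ℝ} {N : ℕ} (w g : V3) (hX : 0 ≤ X) (h : X * (1 + ‖w - g‖) ^ N ≤ C) :
    X ≤ C * (1 + ‖w‖) ^ N * wt N g := by
  unfold wt
  rw [← div_eq_mul_inv, le_div_iff₀ (by positivity)]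
  calc X * (1 + ‖g‖) ^ N ≤ X * ((1 + ‖w‖) * (1 + ‖w - g‖)) ^ N := by
        gcongr; exact peetre w g
    _ = (X * (1 + ‖w - g‖) ^ N) * (1 + ‖w‖) ^ N := by rw [mul_pow]; ring
    _ ≤ _ := by gcongr

/-- Convolution of a kernel with a Hermite function. -/
def Cv (K : V3 → ℝ) (κ : Fin 3 → ℕ) (w : V3) : ℝ := ∫ g, K g * G κ (w - g)

/-- Admissible kernels. -/
def Adm (K : V3 → ℝ) : Prop := Measurable K ∧ ∃ N, Integrable (fun g => |K g| * wt N g)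

lemma Adm.integrable {K : V3 → ℝ} (hK : Adm K) (κ : Fin 3 → ℕ) (w : V3) :
    Integrable (fun g => K g * G κ (w - g)) := by
  obtain ⟨hm, N, hN⟩ := hK
  obtain ⟨C, hC, h⟩ := G_bound κ N
  refine (hN.const_mul (C * (1 + ‖w‖) ^ N)).mono' ?_ (Filter.Eventually.of_forall fun g => ?_)
  · exact (hm.mul ((continuous_G κ).measurable.comp (measurable_const.sub measurable_id))).aestronglyMeasurable
  · have := shift_bound w g (abs_nonneg _) (h (w - g))
    rw [Real.norm_eq_abs, abs_mul]
    calc _ ≤ |K g| * (C * (1 + ‖w‖) ^ N * wt N g) := by gcongr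
      _ = _ := by ring

lemma Adm.integrable' {K : V3 → ℝ} (hK : Adm K) (κ : Fin 3 → ℕ) (w : V3) :
    Integrable (fun u => K (w - u) * G κ u) := by
  have := (hK.integrable κ w).comp_sub_left w
  simpa using this

lemma Cv_eq (K : V3 → ℝ) (κ : Fin 3 → ℕ) (w : V3) :
    ∫ u, K (w - u) * G κ u = Cv K κ w := by
  unfold Cv
  rw [← integral_sub_left_eq_self _ volume w]
  simp

lemma Adm.bound {K : V3 → ℝ} (hK : Adm K) (κ : Fin 3 → ℕ) :
    ∃ C : ℝ, ∃ N : ℕ, 0 ≤ C ∧ ∀ w, |Cv K κ w| ≤ C * (1 + ‖w‖) ^ N := by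
  obtain ⟨hm, N, hN⟩ := hK
  obtain ⟨C, hC, h⟩ := G_bound κ N
  refine ⟨C * ∫ g, |K g| * wt N g, N, mul_nonneg hC (integral_nonneg fun g =>
    mul_nonneg (abs_nonneg _) (wt_pos _ _).le), fun w => ?_⟩
  have := norm_integral_le_of_norm_le (hN.const_mul (C * (1 + ‖w‖) ^ N))
    (f := fun g => K g * G κ (w - g)) (Filter.Eventually.of_forall fun g => by
      have := shift_bound w g (abs_nonneg _) (h (w - g))
      rw [Real.norm_eq_abs, abs_mul]
      calc _ ≤ |K g| * (C * (1 + ‖w‖) ^ N * wt N g) := by gcongr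
        _ = _ := by ring)
  rw [integral_const_mul, Real.norm_eq_abs] at this
  unfold Cv
  linarith

lemma Adm.hasFDerivAt {K : V3 → ℝ} (hK : Adm K) (κ : Fin 3 → ℕ) (w : V3) :
    HasFDerivAt (Cv K κ) (∫ g, K g • DG κ (w - g)) w ∧
      Integrable (fun g => K g • DG κ (w - g)) := by
  have hi := hK.integrable κ w
  obtain ⟨hm, N, hN⟩ := id hK
  obtain ⟨C, hC, h⟩ := DG_bound κ N
  have hmeas : ∀ x, AEStronglyMeasurable (fun g => K g • DG κ (x - g)) volume := fun x =>
    hm.aestronglyMeasurable.smul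
      ((continuous_DG κ).comp (continuous_const.sub continuous_id)).aestronglyMeasurable
  have hb : ∀ g, ∀ x ∈ Metric.ball w 1, ‖K g • DG κ (x - g)‖ ≤
      C * (2 + ‖w‖) ^ N * (|K g| * wt N g) := by
    intro g x hx
    have h1 := shift_bound x g (norm_nonneg _) (h (x - g))
    have h2 : 1 + ‖x‖ ≤ 2 + ‖w‖ := by
      have : ‖x‖ ≤ ‖w‖ + ‖x - w‖ := by
        calc ‖x‖ = ‖w + (x - w)‖ := by simp
          _ ≤ _ := norm_add_le _ _
      rw [Metric.mem_ball, dist_eq_norm] at hx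
      linarith
    have hw := (wt_pos N g).le
    rw [norm_smul, Real.norm_eq_abs]
    calc _ ≤ |K g| * (C * (1 + ‖x‖) ^ N * wt N g) := by gcongr
      _ ≤ |K g| * (C * (2 + ‖w‖) ^ N * wt N g) := by gcongr
      _ = _ := by ring
  have hbi := hN.const_mul (C * (2 + ‖w‖) ^ N)
  refine ⟨?_, hbi.mono' (hmeas w) (Filter.Eventually.of_forall fun g =>
    hb g w (Metric.mem_ball_self one_pos))⟩
  refine hasFDerivAt_integral_of_dominated_of_fderiv_le (𝕜 := ℝ)
    (F := fun x g => K g * G κ (x - g)) (F' := fun x g => K g • DG κ (x - g))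
    (Metric.ball_mem_nhds w one_pos)
    (Filter.Eventually.of_forall fun x => (hK.integrable κ x).aestronglyMeasurable) hi (hmeas w)
    (Filter.Eventually.of_forall hb) hbi (Filter.Eventually.of_forall fun g x _ => ?_)
  exact ((hasFDerivAt_comp_sub g).2 (hasFDerivAt_G κ (x - g))).const_mul (K g)

lemma Adm.fderiv_apply {K : V3 → ℝ} (hK : Adm K) (κ : Fin 3 → ℕ) (w : V3) (t : Fin 3) :
    fderiv ℝ (Cv K κ) w (Pi.single t 1) = -Cv K (κ + Pi.single t 1) w := by
  obtain ⟨h, hi⟩ := hK.hasFDerivAt κ w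
  rw [h.fderiv, ContinuousLinearMap.integral_apply hi]
  unfold Cv
  rw [← integral_neg]
  refine integral_congr_ae (Filter.Eventually.of_forall fun g => ?_)
  simp [DG_apply]

lemma Adm.continuous {K : V3 → ℝ} (hK : Adm K) (κ : Fin 3 → ℕ) : Continuous (Cv K κ) :=
  continuous_iff_continuousAt.2 fun v => (hK.hasFDerivAt κ v).1.continuousAt

lemma integrable_wt {N : ℕ} (hN : 4 ≤ N) : Integrable (wt N) := by
  have := integrable_one_add_norm (E := V3) (μ := volume) (r := N) (by
    simp; exact_mod_cast hN)
  refine this.congr (Filter.Eventually.of_forall fun g => ?_)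
  simp only [wt]
  rw [Real.rpow_neg (by positivity), Real.rpow_natCast]

lemma integrable_term {K : V3 → ℝ} (hK : Adm K) (β lam κ : Fin 3 → ℕ) :
    Integrable (fun v => Herm β v * (G lam v * Cv K κ v)) := by
  obtain ⟨C1, N1, hC1, h1⟩ := Herm_bound β
  obtain ⟨C2, N2, hC2, h2⟩ := hK.bound κ
  obtain ⟨C3, hC3, h3⟩ := G_bound lam (N1 + N2 + 4)
  refine ((integrable_wt le_rfl).const_mul (C1 * C2 * C3)).mono' ?_
    (Filter.Eventually.of_forall fun v => ?_)
  · exact ((continuous_Herm β).mul ((continuous_G lam).mul (hK.continuous κ))).aestronglyMeasurable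
  · simp only [norm_mul, Real.norm_eq_abs, wt]
    rw [← div_eq_mul_inv, le_div_iff₀ (by positivity)]
    calc |Herm β v| * (|G lam v| * |Cv K κ v|) * (1 + ‖v‖) ^ 4
        ≤ (C1 * (1 + ‖v‖) ^ N1) * (|G lam v| * (C2 * (1 + ‖v‖) ^ N2)) * (1 + ‖v‖) ^ 4 := by
          gcongr
          · exact h1 v
          · exact h2 v
      _ = C1 * C2 * (|G lam v| * (1 + ‖v‖) ^ (N1 + N2 + 4)) := by ring
      _ ≤ _ := by gcongr; exact h3 v

lemma integrable_prod_term {K : V3 → ℝ} (hK : Adm K) (β lam κ : Fin 3 → ℕ) :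
    Integrable (fun z : V3 × V3 => Herm β z.1 * (G lam z.1 * (K (z.1 - z.2) * G κ z.2))) := by
  obtain ⟨C1, N1, hC1, h1⟩ := Herm_bound β
  obtain ⟨hm, N, hN⟩ := id hK
  obtain ⟨C2, hC2, h2⟩ := G_bound lam (N1 + N)
  obtain ⟨C3, hC3, h3⟩ := G_bound κ (N + 4)
  have hint := ((integrable_wt le_rfl).convolution_integrand (μ := (volume : Measure V3))
    (ν := (volume : Measure V3)) (ContinuousLinearMap.mul ℝ ℝ) hN).const_mul (C1 * C2 * C3)
  refine hint.mono' ?_ (Filter.Eventually.of_forall fun z => ?_)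
  · have e1 : Measurable (fun z : V3 × V3 => Herm β z.1) :=
      (continuous_Herm β).measurable.comp measurable_fst
    have e2 : Measurable (fun z : V3 × V3 => G lam z.1) :=
      (continuous_G lam).measurable.comp measurable_fst
    have e3 : Measurable (fun z : V3 × V3 => G κ z.2) :=
      (continuous_G κ).measurable.comp measurable_snd
    have e4 : Measurable (fun z : V3 × V3 => K (z.1 - z.2)) :=
      hm.comp (measurable_fst.sub measurable_snd)
    exact (e1.mul (e2.mul (e4.mul e3))).aestronglyMeasurable
  · obtain ⟨v, u⟩ := z
    simp only [norm_mul, Real.norm_eq_abs, ContinuousLinearMap.mul_apply', wt]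
    have hp : 1 + ‖v - u‖ ≤ (1 + ‖v‖) * (1 + ‖u‖) := by
      nlinarith [norm_sub_le v u, mul_nonneg (norm_nonneg v) (norm_nonneg u)]
    have key : |Herm β v| * (|G lam v| * |G κ u|) * ((1 + ‖v - u‖) ^ N * (1 + ‖u‖) ^ 4)
        ≤ C1 * C2 * C3 := by
      calc _ ≤ (C1 * (1 + ‖v‖) ^ N1) * (|G lam v| * |G κ u|) *
            (((1 + ‖v‖) * (1 + ‖u‖)) ^ N * (1 + ‖u‖) ^ 4) := by
            gcongr
            exact h1 v
        _ = C1 * (|G lam v| * (1 + ‖v‖) ^ (N1 + N)) * (|G κ u| * (1 + ‖u‖) ^ (N + 4)) := by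
            rw [mul_pow]; ring
        _ ≤ _ := by
            gcongr
            · exact h2 v
            · exact h3 u
    have : |Herm β v| * (|G lam v| * |G κ u|) ≤
        C1 * C2 * C3 * (((1 + ‖u‖) ^ 4)⁻¹ * ((1 + ‖v - u‖) ^ N)⁻¹) := by
      rw [← mul_inv, ← div_eq_mul_inv, le_div_iff₀ (by positivity)]
      linarith
    calc _ = (|Herm β v| * (|G lam v| * |G κ u|)) * |K (v - u)| := by ring
      _ ≤ C1 * C2 * C3 * (((1 + ‖u‖) ^ 4)⁻¹ * ((1 + ‖v - u‖) ^ N)⁻¹) * |K (v - u)| := by gcongr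
      _ = _ := by ring

lemma integral_prod_term {K : V3 → ℝ} (hK : Adm K) (β lam κ : Fin 3 → ℕ) :
    ∫ z : V3 × V3, Herm β z.1 * (G lam z.1 * (K (z.1 - z.2) * G κ z.2))
      = ∫ v, Herm β v * (G lam v * Cv K κ v) := by
  rw [Measure.volume_eq_prod, integral_prod _ (integrable_prod_term hK β lam κ)]
  refine integral_congr_ae (Filter.Eventually.of_forall fun v => ?_)
  simp only [integral_const_mul, Cv_eq]

lemma integrable_norm_rpow {p : ℝ} (hp : -3 < p) {N : ℕ} (hN : p + 3 < N) :
    Integrable (fun g : V3 => ‖g‖ ^ p * wt N g) := by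
  have key := integrable_fun_norm_addHaar (E := V3) (F := ℝ) volume
    (f := fun r => r ^ p * ((1 + r) ^ N)⁻¹)
  refine key.2 ?_
  have hd : Module.finrank ℝ V3 - 1 = 2 := by simp
  rw [hd, ← Set.Ioc_union_Ioi_eq_Ioi (zero_le_one' ℝ), integrableOn_union]
  have hm : Measurable (fun y : ℝ => y ^ 2 • (y ^ p * ((1 + y) ^ N)⁻¹)) := by fun_prop
  have he : ∀ y : ℝ, 0 < y → y ^ 2 * y ^ p = y ^ (2 + p) := fun y hy => by
    rw [Real.rpow_add hy]; norm_num
  constructor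
  · have h1 : IntegrableOn (fun y : ℝ => y ^ (2 + p)) (Set.Ioc 0 1) := by
      rw [integrableOn_Ioc_iff_integrableOn_Ioo, intervalIntegral.integrableOn_Ioo_rpow_iff one_pos]
      linarith
    refine h1.mono' hm.aestronglyMeasurable ?_
    filter_upwards [ae_restrict_mem measurableSet_Ioc] with y hy
    have hy0 := hy.1
    rw [smul_eq_mul, ← mul_assoc, he y hy0, Real.norm_eq_abs, abs_of_nonneg (by positivity)]
    apply mul_le_of_le_one_right (by positivity)
    apply inv_le_one_of_one_le₀
    exact one_le_pow₀ (by linarith)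
  · have h1 : IntegrableOn (fun y : ℝ => y ^ (2 + p - N)) (Set.Ioi 1) := by
      apply integrableOn_Ioi_rpow_of_lt _ one_pos
      linarith
    refine h1.mono' hm.aestronglyMeasurable ?_
    filter_upwards [ae_restrict_mem measurableSet_Ioi] with y hy
    have hy0 : 0 < y := lt_trans one_pos hy
    rw [smul_eq_mul, ← mul_assoc, he y hy0, Real.norm_eq_abs, abs_of_nonneg (by positivity),
      Real.rpow_sub hy0, div_eq_mul_inv, Real.rpow_natCast]
    gcongr
    linarith

lemma nrm_nonneg (g : V3) : 0 ≤ nrm g := Real.sqrt_nonneg _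

lemma abs_le_nrm (g : V3) (i : Fin 3) : |g i| ≤ nrm g := by
  unfold nrm
  apply Real.abs_le_sqrt
  exact Finset.single_le_sum (f := fun i => g i ^ 2) (fun i _ => sq_nonneg _) (Finset.mem_univ i)

lemma norm_le_nrm (g : V3) : ‖g‖ ≤ nrm g := by
  rw [pi_norm_le_iff_of_nonneg (nrm_nonneg g)]
  exact fun i => abs_le_nrm g i

lemma nrm_le (g : V3) : nrm g ≤ 3 * ‖g‖ := by
  unfold nrm
  rw [Real.sqrt_le_left (by positivity)]
  have h : ∀ i, g i ^ 2 ≤ ‖g‖ ^ 2 := fun i => by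
    rw [← sq_abs (g i)]
    gcongr
    exact abs_le_norm g i
  rw [Fin.sum_univ_three]
  nlinarith [h 0, h 1, h 2, sq_nonneg ‖g‖]

lemma nrm_rpow_le (p : ℝ) : ∃ D : ℝ, 0 ≤ D ∧ ∀ g, nrm g ^ p ≤ D * ‖g‖ ^ p := by
  rcases le_or_gt 0 p with hp | hp
  · refine ⟨3 ^ p, by positivity, fun g => ?_⟩
    rw [← Real.mul_rpow (by norm_num) (norm_nonneg _)]
    exact Real.rpow_le_rpow (nrm_nonneg g) (nrm_le g) hp
  · refine ⟨1, zero_le_one, fun g => ?_⟩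
    rw [one_mul]
    rcases (norm_nonneg g).eq_or_lt with h | h
    · have : nrm g = 0 := le_antisymm (by have := nrm_le g; rw [← h] at this; simpa using this) (nrm_nonneg g)
      rw [this, ← h]
    · exact Real.rpow_le_rpow_of_nonpos h (norm_le_nrm g) hp.le

lemma measurable_nrm : Measurable nrm := by unfold nrm; fun_prop

lemma Aker_bound (Λ γ : ℝ) (g : V3) (i j : Fin 3) :
    |Aker Λ γ g i j| ≤ |Λ| * 2 * nrm g ^ (γ + 2) := by
  unfold Aker
  have h0 := Real.rpow_nonneg (nrm_nonneg g) (γ + 2)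
  rw [abs_mul, abs_mul, abs_of_nonneg h0]
  have h1 : |(if i = j then (1 : ℝ) else 0)| ≤ 1 := by split_ifs <;> simp
  have h2 : |g i * g j / nrm g ^ 2| ≤ 1 := by
    rw [abs_div, abs_mul, abs_of_nonneg (sq_nonneg (nrm g)), sq]
    apply div_le_one_of_le₀ _ (mul_self_nonneg _)
    have := abs_le_nrm g i
    have := abs_le_nrm g j
    have := nrm_nonneg g
    gcongr
  have h3 := abs_sub (if i = j then (1 : ℝ) else 0) (g i * g j / nrm g ^ 2)
  calc _ ≤ |Λ| * nrm g ^ (γ + 2) * 2 := by gcongr; linarith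
    _ = _ := by ring

lemma adm_Aker (Λ γ : ℝ) (hγ : γ > -5) (i j : Fin 3) : Adm (fun g => Aker Λ γ g i j) := by
  have hm : Measurable (fun g => Aker Λ γ g i j) := by
    unfold Aker
    have := measurable_nrm
    fun_prop
  refine ⟨hm, ?_⟩
  obtain ⟨N, hN⟩ := exists_nat_gt (γ + 2 + 3)
  obtain ⟨D, hD, h⟩ := nrm_rpow_le (γ + 2)
  refine ⟨N, ((integrable_norm_rpow (p := γ + 2) (by linarith) hN).const_mul (|Λ| * 2 * D)).mono' ?_
    (Filter.Eventually.of_forall fun g => ?_)⟩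
  · have : Measurable (wt N) := by unfold wt; fun_prop
    exact (hm.abs.mul this).aestronglyMeasurable
  · have hw := (wt_pos N g).le
    rw [Real.norm_eq_abs, abs_mul, abs_abs, abs_of_nonneg hw]
    calc _ ≤ |Λ| * 2 * (D * ‖g‖ ^ (γ + 2)) * wt N g := by
          gcongr
          exact (Aker_bound Λ γ g i j).trans (by gcongr; exact h g)
      _ = _ := by ring

lemma multiFact_pred (α : Fin 3 → ℕ) (s : Fin 3) (hs : 1 ≤ α s) :
    multiFact α = α s * multiFact (α - Pi.single s 1) := by
  unfold multiFact
  have h := Nat.mul_factorial_pred (n := α s) (by omega)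
  fin_cases s <;> simp at h hs ⊢ <;> rw [← h] <;> ring

/-- The flux. -/
def Fl (Λ γ : ℝ) (lam kap : Fin 3 → ℕ) (s : Fin 3) (w : V3) : ℝ :=
  ∑ j : Fin 3, (G lam w * Cv (fun g => Aker Λ γ g s j) (kap + Pi.single j 1) w -
    G (kap + Pi.single j 1) w * Cv (fun g => Aker Λ γ g s j) lam w)

lemma flux_eq (Λ γ : ℝ) (hγ : γ > -5) (lam kap : Fin 3 → ℕ) (s : Fin 3) (w : V3) :
    ∫ w₁ : V3, ∑ j, Aker Λ γ (w - w₁) s j *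
      (Herm lam w₁ * Mxw w₁ * pd j (fun u => Herm kap u * Mxw u) w -
        Herm lam w * Mxw w * pd j (fun u => Herm kap u * Mxw u) w₁) = Fl Λ γ lam kap s w := by
  have e : ∀ w₁ : V3, ∑ j, Aker Λ γ (w - w₁) s j *
      (Herm lam w₁ * Mxw w₁ * pd j (fun u => Herm kap u * Mxw u) w -
        Herm lam w * Mxw w * pd j (fun u => Herm kap u * Mxw u) w₁) =
      ∑ j, (G lam w * (Aker Λ γ (w - w₁) s j * G (kap + Pi.single j 1) w₁) -
        G (kap + Pi.single j 1) w * (Aker Λ γ (w - w₁) s j * G lam w₁)) := by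
    intro w₁
    refine Finset.sum_congr rfl fun j _ => ?_
    have h1 : ∀ x, pd j (fun u => Herm kap u * Mxw u) x = -G (kap + Pi.single j 1) x := pd_G kap j
    rw [h1, h1]
    change _ * (G lam w₁ * _ - G lam w * _) = _
    ring
  simp_rw [e]
  have I1 : ∀ j κ (c : ℝ), Integrable (fun w₁ => c * (Aker Λ γ (w - w₁) s j * G κ w₁)) := fun j κ c =>
    ((adm_Aker Λ γ hγ s j).integrable' κ w).const_mul c
  rw [integral_finsetSum]
  swap
  · exact fun j _ => (I1 _ _ _).sub (I1 _ _ _)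
  unfold Fl
  refine Finset.sum_congr rfl fun j _ => ?_
  rw [integral_sub (I1 _ _ _) (I1 _ _ _), integral_const_mul, integral_const_mul,
    Cv_eq (fun g => Aker Λ γ g s j), Cv_eq (fun g => Aker Λ γ g s j)]

lemma Fl_diff (Λ γ : ℝ) (hγ : γ > -5) (lam kap : Fin 3 → ℕ) (s : Fin 3) (w : V3) :
    DifferentiableAt ℝ (Fl Λ γ lam kap s) w ∧
    fderiv ℝ (Fl Λ γ lam kap s) w (Pi.single s 1) =
      ∑ j : Fin 3, (
        -(G lam w * Cv (fun g => Aker Λ γ g s j) (kap + Pi.single j 1 + Pi.single s 1) w) -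
        G (lam + Pi.single s 1) w * Cv (fun g => Aker Λ γ g s j) (kap + Pi.single j 1) w +
        (G (kap + Pi.single j 1) w * Cv (fun g => Aker Λ γ g s j) (lam + Pi.single s 1) w +
        G (kap + Pi.single j 1 + Pi.single s 1) w * Cv (fun g => Aker Λ γ g s j) lam w)) := by
  have hC : ∀ j κ, HasFDerivAt (Cv (fun g => Aker Λ γ g s j) κ)
      (fderiv ℝ (Cv (fun g => Aker Λ γ g s j) κ) w) w := fun j κ =>
    ((adm_Aker Λ γ hγ s j).hasFDerivAt κ w).1.differentiableAt.hasFDerivAt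
  have h : HasFDerivAt (Fl Λ γ lam kap s) _ w := HasFDerivAt.fun_sum fun j (_ : j ∈ Finset.univ) =>
    ((hasFDerivAt_G lam w).mul (hC j (kap + Pi.single j 1))).sub
      ((hasFDerivAt_G (kap + Pi.single j 1) w).mul (hC j lam))
  refine ⟨h.differentiableAt, ?_⟩
  rw [h.fderiv, _root_.sum_apply]
  refine Finset.sum_congr rfl fun j _ => ?_
  simp only [_root_.sub_apply, _root_.add_apply, _root_.smul_apply, smul_eq_mul, DG_apply,
    (adm_Aker Λ γ hγ s j).fderiv_apply]
  ring

lemma ibp (Λ γ : ℝ) (hγ : γ > -5) (α lam kap : Fin 3 → ℕ) (s : Fin 3) :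
    Integrable (fun v => Herm α v * fderiv ℝ (Fl Λ γ lam kap s) v (Pi.single s 1)) ∧
    ∫ v, Herm α v * fderiv ℝ (Fl Λ γ lam kap s) v (Pi.single s 1) =
      -∫ v, (α s * Herm (α - Pi.single s 1) v) * Fl Λ γ lam kap s v := by
  have IT := fun j β l k => integrable_term (adm_Aker Λ γ hγ s j) β l k
  have h1 : Integrable (fun v => Herm α v * fderiv ℝ (Fl Λ γ lam kap s) v (Pi.single s 1)) := by
    simp_rw [(Fl_diff Λ γ hγ lam kap s _).2, Finset.mul_sum, mul_add, mul_sub, mul_neg]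
    exact integrable_finsetSum _ fun j _ =>
      ((IT _ _ _ _).neg.sub (IT _ _ _ _)).add ((IT _ _ _ _).add (IT _ _ _ _))
  have h2 : ∀ β, Integrable (fun v => Herm β v * Fl Λ γ lam kap s v) := by
    intro β
    unfold Fl
    simp_rw [Finset.mul_sum, mul_sub]
    exact integrable_finsetSum _ fun j _ => (IT _ _ _ _).sub (IT _ _ _ _)
  have e : (fun v => fderiv ℝ (Herm α) v (Pi.single s 1) * Fl Λ γ lam kap s v) =
      fun v => (α s * Herm (α - Pi.single s 1) v) * Fl Λ γ lam kap s v :=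
    funext fun v => by rw [(hasFDerivAt_Herm α v).2 s]
  refine ⟨h1, ?_⟩
  rw [integral_mul_fderiv_eq_neg_fderiv_mul_of_integrable _ h1 (h2 α)
    (fun x _ => (hasFDerivAt_Herm α x).1) (fun x _ => (Fl_diff Λ γ hγ lam kap s x).1)]
  · rw [e]
  · rw [e]
    simp_rw [mul_assoc]
    exact (h2 _).const_mul _

lemma kernel_eq (Λ γ : ℝ) (g : V3) (hg : nrm g ≠ 0) (s t : Fin 3) :
    Λ * (nrm g ^ γ * ((if s = t then (1 : ℝ) else 0) * nrm g ^ (2 : ℕ) - g s * g t)) =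
      Aker Λ γ g s t := by
  have h : 0 < nrm g := lt_of_le_of_ne (nrm_nonneg g) hg.symm
  unfold Aker
  rw [Real.rpow_add h, show ((2 : ℝ)) = ((2 : ℕ) : ℝ) by norm_num, Real.rpow_natCast]
  field_simp

lemma nrm_eq_zero {g : V3} (h : nrm g = 0) : g = 0 := by
  have := norm_le_nrm g
  rw [h] at this
  exact norm_le_zero_iff.1 this

lemma rhs_term (Λ γ : ℝ) (hγ : γ > -5) (β lam kap : Fin 3 → ℕ) (s t : Fin 3) :
    Λ * ∫ z : V3 × V3,
              nrm (z.1 - z.2) ^ γ *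
                ((if s = t then (1 : ℝ) else 0) * nrm (z.1 - z.2) ^ (2 : ℕ) -
                  (z.1 - z.2) s * (z.1 - z.2) t) *
                Herm β z.1 * Mxw z.1 * Mxw z.2 *
                (Herm lam z.2 * Herm (kap + Pi.single t 1) z.1 -
                  Herm lam z.1 * Herm (kap + Pi.single t 1) z.2)
    = -∫ v, (Herm β v * (G lam v * Cv (fun g => Aker Λ γ g s t) (kap + Pi.single t 1) v) -
        Herm β v * (G (kap + Pi.single t 1) v * Cv (fun g => Aker Λ γ g s t) lam v)) := by
  have hA := adm_Aker Λ γ hγ s t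
  rw [integral_sub (integrable_term hA _ _ _) (integrable_term hA _ _ _),
    ← integral_prod_term hA, ← integral_prod_term hA,
    ← integral_sub (integrable_prod_term hA _ _ _) (integrable_prod_term hA _ _ _),
    ← integral_neg, ← integral_const_mul]
  refine integral_congr_ae (Filter.Eventually.of_forall fun z => ?_)
  obtain ⟨v, u⟩ := z
  simp only
  by_cases h : nrm (v - u) = 0
  · have : v = u := sub_eq_zero.1 (nrm_eq_zero h)
    subst this
    ring
  · rw [← kernel_eq Λ γ _ h s t]
    simp only [G]
    ring

/-- the coefficient A_α^{λ,κ} rewritten after integration by parts,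
for |α| ≥ 1 (terms with α_s = 0 are omitted). -/
theorem coeA_after_integration_by_parts (Λ γ : ℝ) (hΛ : 0 < Λ) (hγ : γ > -5)
    (α lam kap : Fin 3 → ℕ) (hα : 1 ≤ degIdx α) :
    coeA Λ γ α lam kap =
      ∑ s : Fin 3, ∑ t : Fin 3,
        if 1 ≤ α s then
          (Λ / (multiFact (α - Pi.single s 1) : ℝ)) *
            ∫ z : V3 × V3,
              nrm (z.1 - z.2) ^ γ *
                ((if s = t then (1 : ℝ) else 0) * nrm (z.1 - z.2) ^ (2 : ℕ) -
                  (z.1 - z.2) s * (z.1 - z.2) t) *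
                Herm (α - Pi.single s 1) z.1 * Mxw z.1 * Mxw z.2 *
                (Herm lam z.2 * Herm (kap + Pi.single t 1) z.1 -
                  Herm lam z.1 * Herm (kap + Pi.single t 1) z.2)
        else 0 := by
  have hQ : ∀ v, div3 (fun w i =>
        ∫ w₁ : V3, ∑ j, Aker Λ γ (w - w₁) i j *
          (Herm lam w₁ * Mxw w₁ * pd j (fun u => Herm kap u * Mxw u) w -
            Herm lam w * Mxw w * pd j (fun u => Herm kap u * Mxw u) w₁)) v =
      ∑ s, fderiv ℝ (Fl Λ γ lam kap s) v (Pi.single s 1) := by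
    intro v
    unfold div3
    refine Finset.sum_congr rfl fun s _ => ?_
    simp_rw [flux_eq Λ γ hγ]
    rfl
  unfold coeA
  simp_rw [hQ, Finset.mul_sum]
  rw [integral_finsetSum _ fun s _ => (ibp Λ γ hγ α lam kap s).1, Finset.mul_sum]
  refine Finset.sum_congr rfl fun s _ => ?_
  rw [(ibp Λ γ hγ α lam kap s).2]
  split_ifs with hs
  · simp_rw [mul_assoc, integral_const_mul]
    have hF : ∫ v, Herm (α - Pi.single s 1) v * Fl Λ γ lam kap s v =
        ∑ t, ∫ v, (Herm (α - Pi.single s 1) v *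
          (G lam v * Cv (fun g => Aker Λ γ g s t) (kap + Pi.single t 1) v) -
          Herm (α - Pi.single s 1) v *
          (G (kap + Pi.single t 1) v * Cv (fun g => Aker Λ γ g s t) lam v)) := by
      rw [← integral_finsetSum]
      swap
      · exact fun t _ => (integrable_term (adm_Aker Λ γ hγ s t) _ _ _).sub
          (integrable_term (adm_Aker Λ γ hγ s t) _ _ _)
      refine integral_congr_ae (Filter.Eventually.of_forall fun v => ?_)
      simp only [Fl, Finset.mul_sum, mul_sub]
    rw [hF, Finset.mul_sum, ← Finset.sum_neg_distrib, Finset.mul_sum]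
    refine Finset.sum_congr rfl fun t _ => ?_
    have hr := rhs_term Λ γ hγ (α - Pi.single s 1) lam kap s t
    simp_rw [mul_assoc] at hr
    rw [div_mul_eq_mul_div Λ, hr, multiFact_pred α s hs]
    have h1 : (α s : ℝ) ≠ 0 := by exact_mod_cast (by omega : α s ≠ 0)
    push_cast
    have h2 : (multiFact (α - Pi.single s 1) : ℝ) ≠ 0 := by
      have : 0 < multiFact (α - Pi.single s 1) := by unfold multiFact; positivity
      exact_mod_cast this.ne'
    field_simp
  · have : α s = 0 := by omega
    simp [this]
end
end
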